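/- For each fixed n ≥ 0, the sequence m ↦ β_{3(2m+1)2ⁿ} (m ∈ ℕ, m ≥ 1) is strictly decreasing and converges, as m → ∞, to the base β̂_n ∈ (1,2] whose quasi-greedy expansion of 1 is t_{n+2}⁺ (Θ(t_{n+2}))^∞. -/

import Mathlib

open Filter Set

noncomputable section

namespace FatSierpinski

/-- The digit set Ω = {(0,0),(1,0),(0,1)} ⊆ ℝ². -/
def OmegaR : Set (ℝ × ℝ) := {(0, 0), (1, 0), (0, 1)}

/-- The fat Sierpinski gasket `S_β` (sequences are 0-indexed: `d i` is the digit d_{i+1}). -/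
def Sfat (β : ℝ) : Set (ℝ × ℝ) :=
  {x | ∃ d : ℕ → ℝ × ℝ, (∀ i, d i ∈ OmegaR) ∧ x = ∑' i : ℕ, (β ^ (i + 1))⁻¹ • d i}

/-- The convex hull `Δ_β` of `S_β`. -/
def Delta (β : ℝ) : Set (ℝ × ℝ) := convexHull ℝ (Sfat β)

/-- The map `f_d(x) = (x + d)/β`. -/
def fmap (β : ℝ) (d : ℝ × ℝ) (x : ℝ × ℝ) : ℝ × ℝ := β⁻¹ • (x + d)

/-- The overlap region `O_β = ⋃_{c ≠ d ∈ Ω} f_c(Δ_β) ∩ f_d(Δ_β)`. -/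
def Ofat (β : ℝ) : Set (ℝ × ℝ) :=
  ⋃ c ∈ OmegaR, ⋃ d ∈ OmegaR, ⋃ (_ : c ≠ d), (fmap β c '' Delta β) ∩ (fmap β d '' Delta β)

/-- The univoque set of codings `𝐔_β`. -/
def Ufat (β : ℝ) : Set (ℕ → ℝ × ℝ) :=
  {d | (∀ i, d i ∈ OmegaR) ∧
    ∀ n : ℕ, (∑' i : ℕ, (β ^ (i + 1))⁻¹ • d (n + i)) ∉ Ofat β}

/-- `d` has smallest period `k`. -/
def SmallestPeriod {α : Type*} (d : ℕ → α) (k : ℕ) : Prop :=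
  0 < k ∧ (∀ i, d (i + k) = d i) ∧ ∀ j, 0 < j → j < k → ∃ i, d (i + j) ≠ d i

/-- The critical base `β_k`. -/
def betaK (k : ℕ) : ℝ :=
  sInf {β : ℝ | β ∈ Set.Ioc (1 : ℝ) 2 ∧ ∃ d ∈ Ufat β, SmallestPeriod d k}

/-- Strict lexicographic order on sequences. -/
def seqLT {α : Type*} [Preorder α] (a b : ℕ → α) : Prop :=
  ∃ n, (∀ i < n, a i = b i) ∧ a n < b n

/-- Weak lexicographic order on sequences. -/
def seqLE {α : Type*} [Preorder α] (a b : ℕ → α) : Prop :=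
  seqLT a b ∨ a = b

/-- `a` is a 0-1 sequence. -/
def IsBinary (a : ℕ → ℕ) : Prop := ∀ i, a i ≤ 1

/-- `a` does not end with `0^∞`. -/
def NotEndInZeros (a : ℕ → ℕ) : Prop := ∀ N, ∃ i, N ≤ i ∧ a i ≠ 0

/-- `∑_{i=1}^∞ a_i β^{-i} = 1` (0-indexed: `a i` is a_{i+1}). -/
def SumsToOne (β : ℝ) (a : ℕ → ℕ) : Prop :=
  ∑' i : ℕ, (a i : ℝ) / β ^ (i + 1) = 1

/-- `a` is the quasi-greedy β-expansion of 1: the lexicographically largest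
binary sequence not ending in `0^∞` whose value in base β is 1. -/
def IsQuasiGreedy (β : ℝ) (a : ℕ → ℕ) : Prop :=
  IsBinary a ∧ NotEndInZeros a ∧ SumsToOne β a ∧
    ∀ b : ℕ → ℕ, IsBinary b → NotEndInZeros b → SumsToOne β b → seqLE b a

/-- `w⁺`: replace the final digit 0 of a block by 1. -/
def plusBlock (w : List ℕ) : List ℕ := w.dropLast ++ [1]

/-- `Θ` flips the outer digits of every consecutive triple
(000↦101, 001↦100, 100↦001, 101↦000). -/
def thetaBlock (w : List ℕ) : List ℕ :=
  w.mapIdx fun i x => if i % 3 = 1 then x else 1 - x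

/-- `tB n` is the block `t_{n+1}`: `t_1 = 100`, `t_{n+1} = t_n⁺ Θ(t_n⁺)`. -/
def tB : ℕ → List ℕ
  | 0 => [1, 0, 0]
  | n + 1 => plusBlock (tB n) ++ thetaBlock (plusBlock (tB n))

/-- The sequence `u w^∞` (the block `u` followed by `w` repeated forever). -/
def prefixPeriodic (u w : List ℕ) : ℕ → ℕ := fun i =>
  if i < u.length then u.getD i 0 else w.getD ((i - u.length) % w.length) 0

/-- The periodic sequence `w^∞`. -/
def periodicSeq (w : List ℕ) : ℕ → ℕ := fun i => w.getD (i % w.length) 0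

/-- The componentwise limit `λ = 101001000101…` of the blocks `t_n`
(the digit `λ_{i+1}` has stabilized in `t_{i+2} = tB (i+1)`). -/
def lamSeq : ℕ → ℕ := fun i => (tB (i + 1)).getD i 0

/-- `β_c` is the unique base in (1,2] with `∑ λ_i β^{-i} = 1`. -/
def IsBetaC (β : ℝ) : Prop := β ∈ Set.Ioc (1 : ℝ) 2 ∧ SumsToOne β lamSeq

/-- The sequence `t_{n+2}⁺ (Θ(t_{n+2}))^∞`, the quasi-greedy expansion of 1 for `β̂_n`. -/
def hatSeq (n : ℕ) : ℕ → ℕ :=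
  prefixPeriodic (plusBlock (tB (n + 1))) (thetaBlock (tB (n + 1)))

/-- The Sharkovskii ordering `k ⊳ ℓ` on positive integers. -/
def Sharkovskii (k l : ℕ) : Prop :=
  ∃ a b c d : ℕ, k = 2 ^ a * (2 * b + 1) ∧ l = 2 ^ c * (2 * d + 1) ∧ k ≠ l ∧
    ((1 ≤ b ∧ d = 0) ∨ (1 ≤ b ∧ 1 ≤ d ∧ (a < c ∨ (a = c ∧ b < d))) ∨
      (b = 0 ∧ d = 0 ∧ c < a))

/-- The digit set Ω as pairs of naturals (for combinatorial statements). -/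
def OmegaD : Set (ℕ × ℕ) := {(0, 0), (1, 0), (0, 1)}

/-- The periodic extension `(d_1 … d_k)^∞` of a block. -/
def cyc (d : List (ℕ × ℕ)) : ℕ → ℕ × ℕ := fun i => d.getD (i % d.length) (0, 0)

/-- Strict lexicographic order on lists. -/
def listLT (u v : List ℕ) : Prop := List.Lex (· < ·) u v

/-- Weak lexicographic order on lists. -/
def listLE (u v : List ℕ) : Prop := listLT u v ∨ u = v

/-- The first components `d_1¹ … d_k¹` of a block over Ω. -/
def comp1 (d : List (ℕ × ℕ)) : List ℕ := d.map Prod.fst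

/-- The second components `d_1² … d_k²` of a block over Ω. -/
def comp2 (d : List (ℕ × ℕ)) : List ℕ := d.map Prod.snd

/-- The digits `(1 - d_1⁺) … (1 - d_k⁺)` where `d⁺ = d¹ + d²`. -/
def comp3 (d : List (ℕ × ℕ)) : List ℕ := d.map fun x => 1 - x.1 - x.2

/-- Cyclic shift of a list by `j`. -/
def rot {α : Type*} (j : ℕ) (l : List α) : List α := l.drop j ++ l.take j

/-- `d` is a representation of the binary block `a`. -/
def IsRepresentation (a : List ℕ) (d : List (ℕ × ℕ)) : Prop :=
  d.length = a.length ∧ (∀ x ∈ d, x ∈ OmegaD) ∧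
  SmallestPeriod (cyc d) a.length ∧
  comp1 d = a ∧ listLE (comp3 d) (comp2 d) ∧ listLE (comp2 d) a ∧
  ∀ j < a.length,
    listLE (comp1 (rot j d)) a ∧ listLE (comp2 (rot j d)) a ∧ listLE (comp3 (rot j d)) a

/-- A binary block is admissible if it has a representation. -/
def IsAdmissible (a : List ℕ) : Prop := ∃ d, IsRepresentation a d

/-- The `i`-th consecutive triple of a block (0-indexed). -/
def tripleAt (a : List ℕ) (i : ℕ) : List ℕ :=
  [a.getD (3 * i) 0, a.getD (3 * i + 1) 0, a.getD (3 * i + 2) 0]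

/-- The edges of the directed graph on {000, 001, 100, 101} defining the subshift `X`. -/
def XEdge (u v : List ℕ) : Prop :=
  (u, v) ∈ ({([1,0,1], [0,0,1]), ([1,0,1], [0,0,0]), ([0,0,1], [0,0,0]),
             ([0,0,0], [1,0,1]), ([0,0,0], [1,0,0]), ([1,0,0], [1,0,1])} :
      Set (List ℕ × List ℕ))

/-!
In barycentric coordinates on `Δ_β`, a word `w` over the three digits lies in `𝐔_β` if and only
if, after every letter different from `c`, the 0-1 sequence marking the places of `c` in `w` has
value less than `1` in base `β`, that is, lies lexicographically below the expansion of `1`.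
So `β_k` is the base whose expansion of `1` is the least sequence that can bound all these
indicator sequences for some word of smallest period `k`.

When the bound starts with `101001000` and `3` is not a period, such a word is, up to a shift and
a permutation of the letters, a concatenation of triples governed by a binary code `E`, and the
indicator sequences to be bounded are determined by the tails of `E`, complemented so as to start
with `0`. For a code of period `2 * m + 1` the least bound of these tails is attained by the
repetition of the first `2 * m + 1` letters of `0110101010…`. For period `(2 * m + 1) * 2 ^ n` it
is attained by the image of this code under the `n`-th power of the Thue–Morse substitution:
either a tail already exceeds the bound, or the code is itself an image under the substitution and
`n` decreases.
These codes decrease with `m` and tend to the substituted `0110101010…`, which is the code of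
`t_{n+2}⁺ (Θ(t_{n+2}))^∞`. Since a larger expansion of `1` belongs to a larger base, and bases
depend continuously on expansions, the critical bases follow.
-/

open scoped Topology

/-! ### Shifts and periods -/

/-- The sequence `x` with its first `n` terms deleted, the `n`-th power of the shift map. -/
def shift {α : Type*} (n : ℕ) (x : ℕ → α) : ℕ → α := fun i => x (n + i)

section Shift

variable {α γ : Type*}

lemma shift_shift (m n : ℕ) (x : ℕ → α) : shift m (shift n x) = shift (n + m) x :=
  funext fun i => by simp only [shift, add_assoc]

lemma periodic_shift {x : ℕ → α} {p : ℕ} (hx : Function.Periodic x p) (n : ℕ) :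
    Function.Periodic (shift n x) p :=
  fun i => (congrArg x (add_assoc n i p).symm).trans (hx (n + i))

lemma periodic_of_periodic_shift {x : ℕ → α} {P n q : ℕ} (hx : Function.Periodic x P)
    (hP : 0 < P) (hq : Function.Periodic (shift n x) q) : Function.Periodic x q := by
  intro i
  have hle : n ≤ i + n * P := (Nat.le_mul_of_pos_right n hP).trans (Nat.le_add_left _ _)
  have h := hq (i + n * P - n)
  simp only [shift] at h
  rw [← hx.nat_mul n i, ← hx.nat_mul n (i + q)]
  simp only [Nat.cast_id]
  rw [show i + q + n * P = n + (i + n * P - n + q) by omega, h,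
    show n + (i + n * P - n) = i + n * P by omega]

lemma SmallestPeriod.periodic {x : ℕ → α} {k : ℕ} (h : SmallestPeriod x k) :
    Function.Periodic x k := h.2.1

lemma smallestPeriod_iff {x : ℕ → α} {k : ℕ} : SmallestPeriod x k ↔
    0 < k ∧ Function.Periodic x k ∧ ∀ j, 0 < j → j < k → ¬Function.Periodic x j := by
  simp only [SmallestPeriod, Function.Periodic, not_forall, ne_eq]

protected lemma SmallestPeriod.shift {x : ℕ → α} {k : ℕ} (h : SmallestPeriod x k) (n : ℕ) :
    SmallestPeriod (shift n x) k := by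
  obtain ⟨hpos, hper, hmin⟩ := smallestPeriod_iff.1 h
  exact smallestPeriod_iff.2 ⟨hpos, periodic_shift hper n, fun j hj hjk hp =>
    hmin j hj hjk (periodic_of_periodic_shift hper hpos hp)⟩

lemma smallestPeriod_comp_iff {f : α → γ} (hf : Function.Injective f) {x : ℕ → α} {k : ℕ} :
    SmallestPeriod (f ∘ x) k ↔ SmallestPeriod x k := by
  simp only [SmallestPeriod, Function.comp_apply, hf.eq_iff, ne_eq]

end Shift

section Lex

variable {α : Type*} [LinearOrder α] {x y z : ℕ → α}

lemma lt_of_lt_of_periodic {K : ℕ} (hK : 0 < K) (hx : Function.Periodic x K)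
    (hy : Function.Periodic y K) (hxy : toLex x < toLex y) (hz : ∀ i < K, z i = y i) :
    toLex x < toLex z := by
  obtain ⟨n, heq, hlt⟩ := hxy
  simp only [Pi.toLex_apply] at heq hlt
  have hn : n < K := by
    by_contra hn
    have h := heq (n % K) ((Nat.mod_lt n hK).trans_le (not_lt.1 hn))
    rw [hx.map_mod_nat, hy.map_mod_nat] at h
    exact hlt.ne h
  exact ⟨n, fun i hi => (heq i hi).trans (hz i (hi.trans hn)).symm, by
    simpa only [Pi.toLex_apply, hz n hn] using hlt⟩

end Lex

/-! ### Values of binary expansions -/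

/-- The number `∑_{i ≥ 1} x_i β^{-i}` with digit sequence `x` in base `β` (`x i` is the digit
`x_{i+1}`). -/
def value (β : ℝ) (x : ℕ → ℕ) : ℝ := ∑' i : ℕ, (x i : ℝ) / β ^ (i + 1)

/-- No shift of `a` exceeds `a` lexicographically; quasi-greedy expansions of `1` have this
property. -/
def IsShiftMaximal (a : ℕ → ℕ) : Prop := ∀ n, toLex (shift n a) ≤ toLex a

protected lemma IsBinary.shift {x : ℕ → ℕ} (hx : IsBinary x) (n : ℕ) : IsBinary (shift n x) :=
  fun i => hx (n + i)

lemma hasSum_one_div_pow_succ {β : ℝ} (hβ : 1 < β) :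
    HasSum (fun i : ℕ => 1 / β ^ (i + 1)) (1 / (β - 1)) := by
  have h := (hasSum_geometric_of_lt_one (by positivity)
    (inv_lt_one_of_one_lt₀ hβ)).mul_left β⁻¹
  have hβ1 : β - 1 ≠ 0 := by linarith
  rw [show 1 / (β - 1) = β⁻¹ * (1 - β⁻¹)⁻¹ by field_simp]
  exact h.congr_fun fun i => by rw [one_div, pow_succ', mul_inv, inv_pow]

section Value

variable {β β' : ℝ} {x y a : ℕ → ℕ}

lemma value_nonneg (hβ : 1 < β) (x : ℕ → ℕ) : 0 ≤ value β x :=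
  tsum_nonneg fun i => by positivity

lemma IsBinary.digit_div_le (hx : IsBinary x) (hβ : 1 < β) (i : ℕ) :
    (x i : ℝ) / β ^ (i + 1) ≤ 1 / β ^ (i + 1) := by
  have : (x i : ℝ) ≤ 1 := by exact_mod_cast hx i
  gcongr

lemma IsBinary.summable (hx : IsBinary x) (hβ : 1 < β) :
    Summable fun i : ℕ => (x i : ℝ) / β ^ (i + 1) :=
  .of_nonneg_of_le (fun i => by positivity) (hx.digit_div_le hβ)
    (hasSum_one_div_pow_succ hβ).summable

lemma IsBinary.value_le (hx : IsBinary x) (hβ : 1 < β) : value β x ≤ 1 / (β - 1) :=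
  (hx.summable hβ).tsum_le_of_sum_le fun s =>
    (s.sum_le_sum fun i _ => hx.digit_div_le hβ i).trans
      (sum_le_hasSum s (fun i _ => by positivity) (hasSum_one_div_pow_succ hβ))

lemma IsBinary.value_eq_sum_add (hx : IsBinary x) (hβ : 1 < β) (N : ℕ) :
    value β x = ∑ i ∈ Finset.range N, (x i : ℝ) / β ^ (i + 1) +
      (β ^ N)⁻¹ * value β (shift N x) := by
  unfold value
  rw [← (hx.summable hβ).sum_add_tsum_nat_add N, ← tsum_mul_left]
  congr 1
  refine tsum_congr fun i => ?_
  rw [shift, add_comm i N, add_assoc, pow_add, ← div_eq_inv_mul, div_div, mul_comm]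

lemma IsBinary.value_eq_head_add (hx : IsBinary x) (hβ : 1 < β) :
    value β x = β⁻¹ * (x 0 + value β (shift 1 x)) := by
  rw [hx.value_eq_sum_add hβ 1, Finset.sum_range_one, zero_add, pow_one]
  ring

lemma value_sub_value (hβ : 1 < β) (hx : IsBinary x) (hy : IsBinary y) {N : ℕ}
    (h : ∀ i < N, x i = y i) :
    value β x - value β y = (β ^ (N + 1))⁻¹ *
      ((x N : ℝ) - y N + value β (shift (N + 1) x) - value β (shift (N + 1) y)) := by
  rw [hx.value_eq_sum_add hβ (N + 1), hy.value_eq_sum_add hβ (N + 1), Finset.sum_range_succ,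
    Finset.sum_range_succ,
    Finset.sum_congr rfl fun i hi => by rw [h i (Finset.mem_range.mp hi)]]
  ring

lemma value_pos (hβ : 1 < β) (hx : IsBinary x) (h0 : ∃ j, x j ≠ 0) : 0 < value β x := by
  obtain ⟨j, hj⟩ := h0
  exact (hx.summable hβ).tsum_pos (fun i => by positivity) j (by positivity)

lemma exists_ne_zero_of_value_eq_one (h : value β x = 1) : ∃ j, x j ≠ 0 := by
  by_contra! h0
  simp [value, h0] at h

lemma IsBinary.strictAntiOn_value (hx : IsBinary x) (h0 : ∃ j, x j ≠ 0) :
    StrictAntiOn (fun β => value β x) (Ioi 1) := by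
  obtain ⟨j, hj⟩ := h0
  intro β (hβ : 1 < β) β' _ hlt
  have : (0 : ℝ) < x j := by exact_mod_cast Nat.pos_of_ne_zero hj
  refine Summable.tsum_lt_tsum (i := j) (fun i => ?_) ?_ (hx.summable (hβ.trans hlt))
    (hx.summable hβ)
  · beta_reduce
    gcongr
  · gcongr

lemma IsBinary.exists_first_diff (ha : IsBinary a) (h : toLex x < toLex a) :
    ∃ N, (∀ i < N, x i = a i) ∧ x N = 0 ∧ a N = 1 := by
  obtain ⟨N, heq, hlt⟩ := h
  simp only [Pi.toLex_apply] at heq hlt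
  have := ha N
  exact ⟨N, heq, by omega, by omega⟩

lemma value_sub_value_le {s : ℝ} (hβ : 1 < β) (hx : IsBinary x) (ha : IsBinary a)
    (h : toLex x < toLex a) (hs : ∀ n, value β (shift n x) ≤ s) (hs1 : 1 ≤ s) :
    value β x - value β a ≤ (s - 1) / β := by
  obtain ⟨N, heq, hxN, haN⟩ := ha.exists_first_diff h
  rw [value_sub_value hβ hx ha heq, hxN, haN]
  calc (β ^ (N + 1))⁻¹ * (((0 : ℕ) : ℝ) - ((1 : ℕ) : ℝ) + value β (shift (N + 1) x)
        - value β (shift (N + 1) a))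
      ≤ (β ^ (N + 1))⁻¹ * (s - 1) := by
        have := hs (N + 1)
        have := value_nonneg hβ (shift (N + 1) a)
        refine mul_le_mul_of_nonneg_left ?_ (by positivity)
        push_cast
        linarith
    _ ≤ β⁻¹ * (s - 1) := by
        have : 0 ≤ s - 1 := by linarith
        gcongr
        exact le_self_pow₀ hβ.le (Nat.succ_ne_zero N)
    _ = (s - 1) / β := (div_eq_inv_mul _ _).symm

/-- The supremum `s` of the values of the shifts of `x` satisfies `s ≤ 1 + (s - 1) / β`. -/
lemma value_shift_le_one (hβ : 1 < β) (hx : IsBinary x) (ha : IsBinary a)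
    (hval : value β a ≤ 1) (hs : ∀ n, toLex (shift n x) ≤ toLex a) (n : ℕ) :
    value β (shift n x) ≤ 1 := by
  have hbdd : BddAbove (range fun n => value β (shift n x)) :=
    ⟨1 / (β - 1), forall_mem_range.2 fun n => (hx.shift n).value_le hβ⟩
  set s := ⨆ n, value β (shift n x)
  have hle : ∀ n, value β (shift n x) ≤ s := le_ciSup hbdd
  by_contra! hn
  have hs1 : 1 < s := hn.trans_le (hle n)
  have hpos : 0 ≤ (s - 1) / β := div_nonneg (by linarith) (by linarith)
  have hsup : s ≤ 1 + (s - 1) / β := ciSup_le fun k => by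
    rcases (hs k).lt_or_eq with h | h
    · have hk : ∀ m, value β (shift m (shift k x)) ≤ s := fun m => by
        rw [shift_shift]
        exact hle _
      linarith [value_sub_value_le hβ (hx.shift k) ha h hk hs1.le]
    · rw [toLex.injective h]
      linarith
  linarith [div_lt_self (sub_pos.2 hs1) hβ]

lemma value_add_le_value (hβ : 1 < β) (ha : IsBinary a) (hx : IsBinary x)
    (hval : value β a ≤ 1) (hmax : IsShiftMaximal a) {N : ℕ}
    (heq : ∀ i < N, a i = x i) (haN : a N = 0) (hxN : x N = 1) :
    value β a + (β ^ (N + 1))⁻¹ * value β (shift (N + 1) x) ≤ value β x := by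
  have h := value_sub_value hβ hx ha fun i hi => (heq i hi).symm
  have hle := value_shift_le_one hβ ha ha hval hmax (N + 1)
  rw [haN, hxN] at h
  rw [← le_sub_iff_add_le', h]
  gcongr
  push_cast
  linarith

lemma lt_of_value_lt_one {β₀ : ℝ} (hβ : 1 < β) (hle : β ≤ β₀) (ha : IsBinary a)
    (hx : IsBinary x) (hval : value β₀ a = 1) (hmax : IsShiftMaximal a) (hx1 : value β x < 1) :
    toLex x < toLex a := by
  have hβ₀ : 1 < β₀ := hβ.trans_le hle
  have hanti (h0 : ∃ j, x j ≠ 0) : value β₀ x ≤ value β x :=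
    (hx.strictAntiOn_value h0).antitoneOn hβ hβ₀ hle
  by_contra hnot
  rcases (not_lt.1 hnot).lt_or_eq with h | h
  · obtain ⟨N, heq, haN, hxN⟩ := hx.exists_first_diff h
    have h1 := value_add_le_value hβ₀ ha hx hval.le hmax heq haN hxN
    have h2 := value_nonneg hβ₀ (shift (N + 1) x)
    have h3 : 0 ≤ (β₀ ^ (N + 1))⁻¹ * value β₀ (shift (N + 1) x) := by positivity
    linarith [hanti ⟨N, by omega⟩]
  · rw [toLex.injective h] at hval
    linarith [hanti (exists_ne_zero_of_value_eq_one hval)]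

lemma base_lt_base (hβ : 1 < β) (hβ' : 1 < β') (ha : IsBinary a) (hx : IsBinary x)
    (hval : value β a = 1) (hval' : value β' x = 1) (hmax : IsShiftMaximal a)
    (hx0 : NotEndInZeros x) (h : toLex a < toLex x) : β < β' := by
  obtain ⟨N, heq, haN, hxN⟩ := hx.exists_first_diff h
  have hle := value_add_le_value hβ ha hx hval.le hmax heq haN hxN
  obtain ⟨i, hi, hxi⟩ := hx0 (N + 1)
  have hpos : 0 < value β (shift (N + 1) x) :=
    value_pos hβ (hx.shift _) ⟨i - (N + 1), by rwa [shift, Nat.add_sub_cancel' hi]⟩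
  have hgt : 1 < value β x := by
    have : 0 < (β ^ (N + 1))⁻¹ * value β (shift (N + 1) x) := by positivity
    linarith
  rw [← hval'] at hgt
  exact (hx.strictAntiOn_value ⟨i, hxi⟩).lt_iff_gt hβ' hβ |>.1 hgt

lemma tendsto_value {ι : Type*} {l : Filter ι} {b : ι → ℝ} {xs : ι → ℕ → ℕ} (hβ : 1 < β)
    (hb : Tendsto b l (𝓝 β)) (hxs : ∀ m, IsBinary (xs m)) (hx : Tendsto xs l (𝓝 x)) :
    Tendsto (fun m => value (b m) (xs m)) l (𝓝 (value β x)) := by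
  obtain ⟨c, hc1, hcβ⟩ := exists_between hβ
  refine tendsto_tsum_of_dominated_convergence (hasSum_one_div_pow_succ hc1).summable
    (fun i => ?_) ?_
  · exact ((continuous_of_discreteTopology (f := ((↑) : ℕ → ℝ))).continuousAt.tendsto.comp
      (tendsto_pi_nhds.1 hx i)).div (hb.pow _) (pow_pos (one_pos.trans hβ) _).ne'
  · filter_upwards [hb.eventually (lt_mem_nhds hcβ)] with m hm i
    have hm1 := hc1.trans hm
    rw [Real.norm_of_nonneg (by positivity)]
    exact ((hxs m).digit_div_le hm1 i).trans (by gcongr)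

lemma exists_lt_value (hx : IsBinary x) {i j : ℕ} (hij : i ≠ j) (hi : x i = 1) (hj : x j = 1) :
    ∃ c ∈ Ioo (1 : ℝ) 2, 1 < value c x := by
  have hlim : Tendsto (fun c : ℝ => 1 / c ^ (i + 1) + 1 / c ^ (j + 1)) (𝓝[>] 1) (𝓝 2) := by
    have hcont : ContinuousAt (fun c : ℝ => 1 / c ^ (i + 1) + 1 / c ^ (j + 1)) 1 := by
      fun_prop (disch := positivity)
    convert hcont.tendsto.mono_left nhdsWithin_le_nhds using 2
    norm_num
  obtain ⟨c, hc, hc12⟩ := ((hlim.eventually (lt_mem_nhds one_lt_two)).and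
    (Ioo_mem_nhdsGT one_lt_two)).exists
  refine ⟨c, hc12, hc.trans_le ?_⟩
  have h := (hx.summable hc12.1).sum_le_tsum {i, j} fun k _ => by
    have := hc12.1
    positivity
  rwa [Finset.sum_pair hij, hi, hj, Nat.cast_one] at h

lemma exists_value_eq_one (hx : IsBinary x) {i j k : ℕ} (hij : i ≠ j) (hi : x i = 1)
    (hj : x j = 1) (hk : x k = 0) : ∃ β ∈ Ioo (1 : ℝ) 2, value β x = 1 := by
  obtain ⟨c, hc, hc1⟩ := exists_lt_value hx hij hi hj
  have h2 : value 2 x < 1 := by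
    have hgeom := hasSum_one_div_pow_succ one_lt_two
    norm_num only at hgeom
    refine hgeom.tsum_eq ▸ Summable.tsum_lt_tsum (i := k) (hx.digit_div_le one_lt_two) ?_
      (hx.summable one_lt_two) hgeom.summable
    simp [hk]
  have hcont : ContinuousOn (fun β => value β x) (Icc c 2) := fun β hβ =>
    (tendsto_value (hc.1.trans_le hβ.1) tendsto_id (fun _ => hx)
      tendsto_const_nhds).mono_left nhdsWithin_le_nhds
  obtain ⟨β, hβ, h⟩ := intermediate_value_Ioo' hc.2.le hcont ⟨h2, hc1⟩
  exact ⟨β, ⟨hc.1.trans hβ.1, hβ.2⟩, h⟩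

lemma tendsto_base {ι : Type*} {l : Filter ι} {b : ι → ℝ} {xs : ι → ℕ → ℕ}
    (hb : ∀ m, 1 < b m) (hxs : ∀ m, IsBinary (xs m)) (hval : ∀ m, value (b m) (xs m) = 1)
    (hβ : 1 < β) (hx : IsBinary x) (hvalx : value β x = 1) (hlim : Tendsto xs l (𝓝 x)) :
    Tendsto b l (𝓝 β) := by
  have hptwise {c : ℝ} (hc : 1 < c) : Tendsto (fun m => value c (xs m)) l (𝓝 (value c x)) :=
    tendsto_value hc tendsto_const_nhds hxs hlim
  have hanti (m : ι) := (hxs m).strictAntiOn_value (exists_ne_zero_of_value_eq_one (hval m))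
  have hantix := hx.strictAntiOn_value (exists_ne_zero_of_value_eq_one hvalx)
  refine tendsto_order.2 ⟨fun c hc => ?_, fun c hc => ?_⟩
  · rcases le_or_gt c 1 with hc1 | hc1
    · exact .of_forall fun m => hc1.trans_lt (hb m)
    · have hgt : 1 < value c x := hvalx ▸ hantix hc1 hβ hc
      filter_upwards [(hptwise hc1).eventually (lt_mem_nhds hgt)] with m hm
      exact ((hanti m).lt_iff_gt (hb m) hc1).1 ((hval m).trans_lt hm)
  · have hc1 := hβ.trans hc
    have hlt : value c x < 1 := hvalx ▸ hantix hβ hc1 hc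
    filter_upwards [(hptwise hc1).eventually (gt_mem_nhds hlt)] with m hm
    exact ((hanti m).lt_iff_gt hc1 (hb m)).1 (hm.trans_eq (hval m).symm)

end Value

/-! ### The Thue–Morse substitution and the extremal codes -/

/-- The tail of the binary code `E` from place `i`, complemented if necessary so that it starts
with `false`. -/
def normTail (i : ℕ) (E : ℕ → Bool) : ℕ → Bool := fun j => xor (E i) (E (i + j))

/-- The Thue–Morse substitution `0 ↦ 01`, `1 ↦ 10` applied to a binary code. -/
def tmSubst (E : ℕ → Bool) : ℕ → Bool := fun i => xor (E (i / 2)) (decide (i % 2 = 1))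

/-- The code `0 1 1 0 1 0 1 0 …` of the limit sequence for `n = 0`. -/
def hatCode : ℕ → Bool := fun i => decide (i = 1 ∨ i ≠ 0 ∧ i % 2 = 0)

/-- The code of the limit sequence `t_{n+2}⁺ (Θ(t_{n+2}))^∞`, see `hatSeq_eq`. -/
def limitCode (n : ℕ) : ℕ → Bool := tmSubst^[n] hatCode

/-- The code, periodic with period `(2 * m + 1) * 2 ^ n`, of the sequence whose base is the
critical base of period `3 * (2 * m + 1) * 2 ^ n`. For `n = 0` it repeats the first `2 * m + 1`
letters of `hatCode`. -/
def extremalCode (m n : ℕ) : ℕ → Bool := tmSubst^[n] fun i => hatCode (i % (2 * m + 1))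

section NormTail

variable {E F : ℕ → Bool}

lemma normTail_shift (i j : ℕ) (E : ℕ → Bool) :
    normTail j (shift i E) = normTail (i + j) E :=
  funext fun k => by simp only [normTail, shift, add_assoc]

lemma periodic_normTail {p : ℕ} (hE : Function.Periodic E p) (i : ℕ) :
    Function.Periodic (normTail i E) p :=
  fun j => by simp only [normTail, ← add_assoc, hE (i + j)]

lemma normTail_mod {p : ℕ} (hE : Function.Periodic E p) (i : ℕ) :
    normTail (i % p) E = normTail i E := by
  funext j
  rw [normTail, normTail, hE.map_mod_nat, ← hE.map_mod_nat (i % p + j), Nat.mod_add_mod,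
    hE.map_mod_nat]

lemma normTail_lt_of_eq {i : ℕ} (h0 : F 0 = false) (h1 : F 1 = true) (h2 : F 2 = true)
    (h : E (i + 1) = E i ∨ E (i + 2) = E i) : toLex (normTail i E) < toLex F := by
  by_cases h' : E (i + 1) = E i
  · refine ⟨1, fun j hj => ?_, ?_⟩
    · simp [Nat.lt_one_iff.1 hj, normTail, h0]
    · simp [normTail, h', h1]
  · refine ⟨2, fun j hj => ?_, ?_⟩
    · interval_cases j
      · simp [normTail, h0]
      · simpa [normTail, h1] using Ne.symm h'
    · simp [normTail, h.resolve_left h', h2]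

end NormTail

section Subst

variable {E F : ℕ → Bool}

lemma tmSubst_two_mul (E : ℕ → Bool) (i : ℕ) : tmSubst E (2 * i) = E i := by
  simp [tmSubst]

lemma tmSubst_two_mul_add_one (E : ℕ → Bool) (i : ℕ) : tmSubst E (2 * i + 1) = !E i := by
  simp [tmSubst, Nat.mul_add_div]

lemma tmSubst_lt_tmSubst (h : toLex E < toLex F) : toLex (tmSubst E) < toLex (tmSubst F) := by
  obtain ⟨N, heq, hlt⟩ := h
  simp only [Pi.toLex_apply] at heq hlt
  refine ⟨2 * N, fun i hi => ?_, ?_⟩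
  · simp only [Pi.toLex_apply, tmSubst, heq (i / 2) (by omega)]
  · simpa only [Pi.toLex_apply, tmSubst_two_mul] using hlt

lemma tmSubst_le_tmSubst (h : toLex E ≤ toLex F) : toLex (tmSubst E) ≤ toLex (tmSubst F) := by
  rcases h.lt_or_eq with h | h
  · exact (tmSubst_lt_tmSubst h).le
  · rw [toLex.injective h]

lemma normTail_two_mul_tmSubst (i : ℕ) (E : ℕ → Bool) :
    normTail (2 * i) (tmSubst E) = tmSubst (normTail i E) := by
  funext j
  simp [normTail, tmSubst, Nat.mul_add_div]

lemma periodic_tmSubst_iff {q : ℕ} :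
    Function.Periodic (tmSubst E) (2 * q) ↔ Function.Periodic E q := by
  refine ⟨fun h i => ?_, fun h i => ?_⟩
  · rw [← tmSubst_two_mul E, ← tmSubst_two_mul E, mul_add, h]
  · rw [tmSubst, tmSubst, Nat.add_mul_div_left _ _ two_pos, h, Nat.add_mul_mod_self_left]

/-- An odd period would force `E (m + j) = !E j = E (m + j + 1)` for all `j`. -/
lemma not_periodic_tmSubst_of_odd (E : ℕ → Bool) (m : ℕ) :
    ¬Function.Periodic (tmSubst E) (2 * m + 1) := by
  intro h
  have heven (j : ℕ) : E (m + j) = !E j := by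
    have hj := h (2 * j)
    rw [show 2 * j + (2 * m + 1) = 2 * (m + j) + 1 by ring, tmSubst_two_mul_add_one,
      tmSubst_two_mul] at hj
    rw [← hj, Bool.not_not]
  have hodd (j : ℕ) : E (m + j + 1) = !E j := by
    have hj := h (2 * j + 1)
    rwa [show 2 * j + 1 + (2 * m + 1) = 2 * (m + j + 1) by ring, tmSubst_two_mul,
      tmSubst_two_mul_add_one] at hj
  have hconst (j : ℕ) : E (m + j) = E m := by
    induction j with
    | zero => rfl
    | succ j ih => rw [← add_assoc, hodd, ← heven, ih]
  exact Bool.not_ne_self (E m) ((heven m).symm.trans (hconst m))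

lemma eq_tmSubst_of_ne (h : ∀ j, E (2 * j) ≠ E (2 * j + 1)) :
    E = tmSubst fun j => E (2 * j) := by
  funext i
  rcases Nat.even_or_odd' i with ⟨j, rfl | rfl⟩
  · rw [tmSubst_two_mul]
  · rw [tmSubst_two_mul_add_one, Bool.eq_not_iff]
    exact (h j).symm

end Subst

section Extremal

variable {m n : ℕ}

lemma extremalCode_zero (m i : ℕ) : extremalCode m 0 i = hatCode (i % (2 * m + 1)) := rfl

lemma extremalCode_succ (m n : ℕ) : extremalCode m (n + 1) = tmSubst (extremalCode m n) :=
  Function.iterate_succ_apply' _ _ _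

lemma extremalCode_zero_of_lt {i : ℕ} (hi : i < 2 * m + 1) : extremalCode m 0 i = hatCode i := by
  rw [extremalCode_zero, Nat.mod_eq_of_lt hi]

lemma periodic_extremalCode (m n : ℕ) :
    Function.Periodic (extremalCode m n) ((2 * m + 1) * 2 ^ n) := by
  induction n with
  | zero =>
    intro i
    simp only [extremalCode_zero, pow_zero, mul_one, Nat.add_mod_right]
  | succ n ih =>
    rw [extremalCode_succ, pow_succ, ← mul_assoc, mul_comm]
    exact periodic_tmSubst_iff.2 ih

lemma extremalCode_prefix (hm : 1 ≤ m) (n : ℕ) :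
    extremalCode m n 0 = false ∧ extremalCode m n 1 = true ∧ extremalCode m n 2 = true ∧
      extremalCode m n 3 = false := by
  induction n with
  | zero =>
    have h3 : 3 % (2 * m + 1) = 0 ∨ 3 % (2 * m + 1) = 3 := by
      rcases hm.eq_or_lt with rfl | hm
      · exact .inl rfl
      · exact .inr (Nat.mod_eq_of_lt (by omega))
    refine ⟨rfl, ?_, ?_, ?_⟩
    · rw [extremalCode_zero_of_lt (by omega)]; rfl
    · rw [extremalCode_zero_of_lt (by omega)]; rfl
    · rcases h3 with h3 | h3 <;> rw [extremalCode_zero, h3] <;> rfl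
  | succ n ih => simp [extremalCode_succ, tmSubst, ih]

lemma extremalCode_zero_add_two {r : ℕ} (hr : 2 ≤ r) (hrm : r < 2 * m + 1) :
    extremalCode m 0 (r + 2) = extremalCode m 0 r := by
  have hwrap (i : ℕ) : extremalCode m 0 (2 * m + 1 + i) = extremalCode m 0 i := by
    simp only [extremalCode_zero, Nat.add_mod_left]
  rcases lt_trichotomy (r + 2) (2 * m + 1) with h | h | h
  · rw [extremalCode_zero_of_lt h, extremalCode_zero_of_lt hrm]
    simp only [hatCode, decide_eq_decide]
    omega
  · rw [extremalCode_zero_of_lt hrm, show r + 2 = 2 * m + 1 + 0 by omega, hwrap,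
      extremalCode_zero_of_lt (by omega)]
    simp only [hatCode, decide_eq_decide]
    omega
  · rw [extremalCode_zero_of_lt hrm, show r + 2 = 2 * m + 1 + 1 by omega, hwrap,
      extremalCode_zero_of_lt (by omega)]
    simp only [hatCode, decide_eq_decide, true_or, true_iff]
    omega

lemma normTail_extremalCode_lt (hm : 1 ≤ m) {i : ℕ} (hi : ¬(2 * m + 1) * 2 ^ n ∣ i) :
    toLex (normTail i (extremalCode m n)) < toLex (extremalCode m n) := by
  induction n generalizing i with
  | zero =>
    obtain ⟨h0, h1, h2, -⟩ := extremalCode_prefix hm 0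
    rw [pow_zero, mul_one] at hi
    have hper : Function.Periodic (extremalCode m 0) (2 * m + 1) := by
      simpa only [pow_zero, mul_one] using periodic_extremalCode m 0
    rw [← normTail_mod hper]
    have hpos : i % (2 * m + 1) ≠ 0 := mt Nat.dvd_of_mod_eq_zero hi
    have hlt : i % (2 * m + 1) < 2 * m + 1 := Nat.mod_lt _ (by omega)
    refine normTail_lt_of_eq h0 h1 h2 ?_
    rcases (Nat.one_le_iff_ne_zero.2 hpos).eq_or_lt with h | h
    · rw [← h]
      exact .inl (h2.trans h1.symm)
    · exact .inr (extremalCode_zero_add_two h hlt)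
  | succ n ih =>
    rcases Nat.even_or_odd' i with ⟨j, rfl | rfl⟩
    · rw [extremalCode_succ, normTail_two_mul_tmSubst]
      refine tmSubst_lt_tmSubst (ih fun hj => hi ?_)
      rw [pow_succ, ← mul_assoc, mul_comm]
      exact Nat.mul_dvd_mul_left 2 hj
    · obtain ⟨h0, h1, h2, -⟩ := extremalCode_prefix hm (n + 1)
      refine normTail_lt_of_eq h0 h1 h2 ?_
      simp only [extremalCode_succ, show 2 * j + 1 + 1 = 2 * (j + 1) by ring,
        show 2 * j + 1 + 2 = 2 * (j + 1) + 1 by ring, tmSubst_two_mul, tmSubst_two_mul_add_one]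
      cases extremalCode m n j <;> cases extremalCode m n (j + 1) <;> simp

lemma normTail_extremalCode_le (hm : 1 ≤ m) (n i : ℕ) :
    toLex (normTail i (extremalCode m n)) ≤ toLex (extremalCode m n) := by
  by_cases hi : (2 * m + 1) * 2 ^ n ∣ i
  · rw [← normTail_mod (periodic_extremalCode m n), Nat.mod_eq_zero_of_dvd hi]
    refine le_of_eq (congrArg toLex (funext fun j => ?_))
    simp only [normTail, (extremalCode_prefix hm n).1, Bool.false_bne, zero_add]
  · exact (normTail_extremalCode_lt hm hi).le

lemma extremalCode_lt_extremalCode {m' : ℕ} (hm : 1 ≤ m) (h : m < m') (n : ℕ) :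
    toLex (extremalCode m' n) < toLex (extremalCode m n) := by
  induction n with
  | zero =>
    have hwrap (i : ℕ) (hi : i ≤ 2) : extremalCode m 0 (2 * m + 1 + i) = hatCode i := by
      rw [extremalCode_zero, Nat.add_mod_left, Nat.mod_eq_of_lt (by omega)]
    refine ⟨2 * m + 1 + 2, fun i hi => ?_, ?_⟩
    · simp only [Pi.toLex_apply]
      rw [extremalCode_zero_of_lt (by omega)]
      rcases Nat.lt_or_ge i (2 * m + 1) with hi' | hi'
      · rw [extremalCode_zero_of_lt hi']
      · obtain ⟨j, rfl⟩ := Nat.exists_eq_add_of_le hi'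
        rw [hwrap j (by omega)]
        simp only [hatCode, decide_eq_decide]
        omega
    · have hm' : extremalCode m' 0 (2 * m + 1 + 2) = false := by
        have : (2 * m + 1 + 2) % (2 * m' + 1) = 0 ∨ (2 * m + 1 + 2) % (2 * m' + 1) = 2 * m + 3 := by
          rcases (Nat.succ_le_of_lt h).eq_or_lt with rfl | h
          · exact .inl (Nat.mod_self _)
          · exact .inr (Nat.mod_eq_of_lt (by omega))
        simp only [extremalCode_zero, hatCode, decide_eq_false_iff_not]
        omega
      rw [Pi.toLex_apply, Pi.toLex_apply, hm', hwrap 2 le_rfl]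
      exact Bool.false_lt_true
  | succ n ih =>
    simpa only [extremalCode_succ] using tmSubst_lt_tmSubst ih

lemma extremalCode_succ_lt_hatCode (hm : 1 ≤ m) (n : ℕ) :
    toLex (extremalCode m (n + 1)) < toLex hatCode := by
  obtain ⟨h0, h1, h2, h3⟩ := extremalCode_prefix hm n
  refine ⟨6, fun i hi => ?_, ?_⟩
  · interval_cases i <;> simp [extremalCode_succ, tmSubst, h0, h1, h2, hatCode]
  · simp [extremalCode_succ, tmSubst, h3, hatCode]

end Extremal

section Desubstitution

variable {E : ℕ → Bool} {p L : ℕ}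

lemma normTail_eq_hatCode_of_ne (h1 : E p ≠ E (p + 1)) (h2 : E (p + 1) = E (p + 2)) :
    ∀ l ≤ 2, normTail p E l = hatCode l := by
  have h1' : xor (E p) (E (p + 1)) = true := by simpa using h1
  intro l hl
  interval_cases l
  · simp [normTail, hatCode]
  · simp [normTail, hatCode, h1']
  · simp [normTail, hatCode, ← h2, h1']

lemma ne_of_normTail_eq_hatCode (h : toLex (normTail p E) < toLex hatCode) (hL : L ≠ 0)
    (hLeven : Even L) (hE : ∀ l ≤ L, normTail p E l = hatCode l) :
    E (p + L) ≠ E (p + L + 1) := by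
  intro heq
  have hLe := Nat.even_iff.1 hLeven
  refine h.not_gt ⟨L + 1, fun l hl => (hE l (Nat.lt_succ_iff.1 hl)).symm, ?_⟩
  have hnext : normTail p E (L + 1) = hatCode L := by
    rw [← hE L le_rfl, normTail, normTail, ← add_assoc, heq]
  have hhatL : hatCode L = true := by simp [hatCode, hL, hLe]
  have hhat : hatCode (L + 1) = false := by
    simp only [hatCode, decide_eq_false_iff_not]
    omega
  rw [Pi.toLex_apply, Pi.toLex_apply, hnext, hhatL, hhat]
  exact Bool.false_lt_true

lemma normTail_eq_hatCode_extend (hL : L ≠ 0) (hLeven : Even L)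
    (hE : ∀ l ≤ L, normTail p E l = hatCode l) (h1 : E (p + L) ≠ E (p + L + 1))
    (h2 : E (p + L + 1) ≠ E (p + L + 2)) : ∀ l ≤ L + 2, normTail p E l = hatCode l := by
  have hLe := Nat.even_iff.1 hLeven
  have hhat : hatCode L = true ∧ hatCode (L + 1) = false ∧ hatCode (L + 2) = true := by
    simp only [hatCode, decide_eq_true_eq, decide_eq_false_iff_not]
    omega
  have hEL : xor (E p) (E (p + L)) = true := (hE L le_rfl).trans hhat.1
  have hE1 : E (p + L + 1) = !E (p + L) := Bool.eq_not.2 h1.symm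
  have hE2 : E (p + L + 2) = E (p + L) := by rw [Bool.eq_not.2 h2.symm, hE1, Bool.not_not]
  intro l hl
  rcases Nat.lt_or_ge L l with hlt | hge
  · obtain rfl | rfl : l = L + 1 ∨ l = L + 2 := by omega
    · rw [hhat.2.1, normTail, ← add_assoc, hE1, Bool.xor_not, hEL, Bool.not_true]
    · rw [hhat.2.2, normTail, ← add_assoc, hE2, hEL]
  · exact hE l hge

/-- A tail starting `011` cannot exceed `hatCode`, so it alternates until another block `011`
or `100` starts; consecutive such blocks begin an even distance apart. -/
lemma exists_forall_ne_of_normTail_lt (h : ∀ i, toLex (normTail i E) < toLex hatCode)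
    (hne : ∃ i, E i ≠ E (i + 1)) :
    ∃ i₀, ∀ j, E (i₀ + 2 * j) ≠ E (i₀ + 2 * j + 1) := by
  by_cases hblock : ∃ i, E i ≠ E (i + 1) ∧ E (i + 1) = E (i + 2)
  · obtain ⟨i, h1, h2⟩ := hblock
    have hinv : ∀ j, ∃ p L, L ≠ 0 ∧ Even L ∧ p + L = i + 2 * (j + 1) ∧
        ∀ l ≤ L, normTail p E l = hatCode l := by
      intro j
      induction j with
      | zero => exact ⟨i, 2, two_ne_zero, even_two, rfl, normTail_eq_hatCode_of_ne h1 h2⟩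
      | succ j ih =>
        obtain ⟨p, L, hL, hLe, hpL, hE⟩ := ih
        have hne' := ne_of_normTail_eq_hatCode (h p) hL hLe hE
        by_cases hc : E (p + L + 1) = E (p + L + 2)
        · exact ⟨p + L, 2, two_ne_zero, even_two, by omega, normTail_eq_hatCode_of_ne hne' hc⟩
        · exact ⟨p, L + 2, by omega, hLe.add even_two, by omega,
            normTail_eq_hatCode_extend hL hLe hE hne' hc⟩
    refine ⟨i, fun j => ?_⟩
    cases j with
    | zero => exact h1
    | succ j =>
      obtain ⟨p, L, hL, hLe, hpL, hE⟩ := hinv j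
      exact hpL ▸ ne_of_normTail_eq_hatCode (h p) hL hLe hE
  · push Not at hblock
    obtain ⟨i, hi⟩ := hne
    have halt (j : ℕ) : E (i + j) ≠ E (i + j + 1) := by
      induction j with
      | zero => exact hi
      | succ j ih => exact hblock (i + j) ih
    exact ⟨i, fun j => halt (2 * j)⟩

lemma exists_ne_succ_of_not_periodic {α : Type*} {x : ℕ → α} {q : ℕ}
    (h : ¬Function.Periodic x q) : ∃ i, x i ≠ x (i + 1) := by
  by_contra! hc
  have hconst (i : ℕ) : x i = x 0 := by
    induction i with
    | zero => rfl
    | succ i ih => rw [← hc, ih]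
  exact h fun i => (hconst _).trans (hconst _).symm

lemma exists_shift_eq_tmSubst {q : ℕ} (h : ∀ i, toLex (normTail i E) < toLex hatCode)
    (hq : ¬Function.Periodic E q) : ∃ i₀ F, shift i₀ E = tmSubst F := by
  obtain ⟨i₀, hi₀⟩ := exists_forall_ne_of_normTail_lt h (exists_ne_succ_of_not_periodic hq)
  exact ⟨i₀, _, eq_tmSubst_of_ne hi₀⟩

variable {m n : ℕ}

lemma exists_extremalCode_zero_le (hp : Function.Periodic E (2 * m + 1))
    (hnp : ¬Function.Periodic E 1) : ∃ i, toLex (extremalCode m 0) ≤ toLex (normTail i E) := by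
  by_contra! hlt
  have hhat (i : ℕ) : toLex (normTail i E) < toLex hatCode := by
    refine lt_of_lt_of_periodic (Nat.succ_pos (2 * m)) (periodic_normTail hp i) ?_ (hlt i)
      fun j hj => (extremalCode_zero_of_lt hj).symm
    simpa only [pow_zero, mul_one] using periodic_extremalCode m 0
  obtain ⟨i₀, F, hF⟩ := exists_shift_eq_tmSubst hhat hnp
  exact not_periodic_tmSubst_of_odd F m (hF ▸ periodic_shift hp i₀)

theorem exists_extremalCode_le_normTail (hm : 1 ≤ m)
    (hp : Function.Periodic E ((2 * m + 1) * 2 ^ n)) (hnp : ¬Function.Periodic E (2 ^ n)) :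
    ∃ i, toLex (extremalCode m n) ≤ toLex (normTail i E) := by
  induction n generalizing E with
  | zero =>
    rw [pow_zero] at hp hnp
    exact exists_extremalCode_zero_le (mul_one (2 * m + 1) ▸ hp) hnp
  | succ n ih =>
    by_contra! hlt
    obtain ⟨i₀, F, hF⟩ := exists_shift_eq_tmSubst
      (fun i => (hlt i).trans (extremalCode_succ_lt_hatCode hm n)) hnp
    have hFp : Function.Periodic F ((2 * m + 1) * 2 ^ n) := by
      rw [← periodic_tmSubst_iff, ← hF, mul_left_comm, ← pow_succ']
      exact periodic_shift hp i₀
    have hFnp : ¬Function.Periodic F (2 ^ n) := fun hF2 => hnp <| by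
      rw [← periodic_tmSubst_iff, ← hF, ← pow_succ'] at hF2
      exact periodic_of_periodic_shift hp (by positivity) hF2
    obtain ⟨i, hi⟩ := ih hFp hFnp
    have hle := tmSubst_le_tmSubst hi
    rw [← normTail_two_mul_tmSubst, ← hF, normTail_shift, ← extremalCode_succ] at hle
    exact (hlt _).not_ge hle

end Desubstitution

/-! ### Triples -/

/-- The concatenation of the triples `(1 - E j) 0 E (j + 1)`. All the extremal sequences and limit
sequences of the problem have this form, with a code `E` starting with `0 1 1 0`. -/
def tripleSeq (E : ℕ → Bool) : ℕ → ℕ := fun i =>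
  if i % 3 = 0 then (!E (i / 3)).toNat else if i % 3 = 1 then 0 else (E (i / 3 + 1)).toNat

lemma exists_eq_three_mul_add (i : ℕ) : ∃ j, i = 3 * j ∨ i = 3 * j + 1 ∨ i = 3 * j + 2 :=
  ⟨i / 3, by omega⟩

section TripleSeq

variable {E F : ℕ → Bool}

lemma tripleSeq_three_mul (E : ℕ → Bool) (j : ℕ) : tripleSeq E (3 * j) = (!E j).toNat := by
  simp [tripleSeq]

lemma tripleSeq_three_mul_add_one (E : ℕ → Bool) (j : ℕ) : tripleSeq E (3 * j + 1) = 0 := by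
  simp [tripleSeq]

lemma tripleSeq_three_mul_add_two (E : ℕ → Bool) (j : ℕ) :
    tripleSeq E (3 * j + 2) = (E (j + 1)).toNat := by
  simp [tripleSeq, Nat.mul_add_div]

lemma isBinary_tripleSeq (E : ℕ → Bool) : IsBinary (tripleSeq E) := by
  intro i
  obtain ⟨j, rfl | rfl | rfl⟩ := exists_eq_three_mul_add i
  · exact (tripleSeq_three_mul E j).trans_le (Bool.toNat_le _)
  · exact (tripleSeq_three_mul_add_one E j).trans_le zero_le_one
  · exact (tripleSeq_three_mul_add_two E j).trans_le (Bool.toNat_le _)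

lemma notEndInZeros_tripleSeq (E : ℕ → Bool) : NotEndInZeros (tripleSeq E) := by
  intro N
  cases h : E (N + 1)
  · exact ⟨3 * (N + 1), by omega, by simp [tripleSeq_three_mul, h]⟩
  · exact ⟨3 * N + 2, by omega, by simp [tripleSeq_three_mul_add_two, h]⟩

lemma tripleSeq_lt_tripleSeq (h0 : E 0 = F 0) (h : toLex E < toLex F) :
    toLex (tripleSeq E) < toLex (tripleSeq F) := by
  obtain ⟨N, heq, hlt⟩ := h
  simp only [Pi.toLex_apply] at heq hlt
  obtain ⟨N, rfl⟩ := Nat.exists_eq_succ_of_ne_zero (show N ≠ 0 by rintro rfl; exact hlt.ne h0)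
  refine ⟨3 * N + 2, fun i hi => ?_, ?_⟩ <;> simp only [Pi.toLex_apply]
  · obtain ⟨j, rfl | rfl | rfl⟩ := exists_eq_three_mul_add i
    · rw [tripleSeq_three_mul, tripleSeq_three_mul, heq j (by omega)]
    · rw [tripleSeq_three_mul_add_one, tripleSeq_three_mul_add_one]
    · rw [tripleSeq_three_mul_add_two, tripleSeq_three_mul_add_two, heq (j + 1) (by omega)]
  · obtain ⟨hE, hF⟩ := Bool.lt_iff.1 hlt
    rw [tripleSeq_three_mul_add_two, tripleSeq_three_mul_add_two, hE, hF]
    exact Nat.zero_lt_one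

lemma tripleSeq_le_tripleSeq (h0 : E 0 = F 0) (h : toLex E ≤ toLex F) :
    toLex (tripleSeq E) ≤ toLex (tripleSeq F) := by
  rcases h.lt_or_eq with h | h
  · exact (tripleSeq_lt_tripleSeq h0 h).le
  · rw [toLex.injective h]

lemma tripleSeq_prefix
    (hF : F 0 = false ∧ F 1 = true ∧ F 2 = true ∧ F 3 = false) :
    tripleSeq F 0 = 1 ∧ tripleSeq F 1 = 0 ∧ tripleSeq F 2 = 1 ∧ tripleSeq F 3 = 0 ∧
      tripleSeq F 4 = 0 ∧ tripleSeq F 5 = 1 ∧ tripleSeq F 6 = 0 ∧ tripleSeq F 7 = 0 ∧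
      tripleSeq F 8 = 0 := by
  simp [tripleSeq, hF]

lemma continuous_tmSubst : Continuous tmSubst :=
  continuous_pi fun i => (continuous_of_discreteTopology
    (f := fun b => xor b (decide (i % 2 = 1)))).comp (continuous_apply (i / 2))

lemma continuous_tripleSeq : Continuous tripleSeq := by
  refine continuous_pi fun i => ?_
  obtain ⟨j, rfl | rfl | rfl⟩ := exists_eq_three_mul_add i
  · simp only [tripleSeq_three_mul]
    exact (continuous_of_discreteTopology (f := fun b => (!b).toNat)).comp (continuous_apply j)
  · simp only [tripleSeq_three_mul_add_one]
    exact continuous_const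
  · simp only [tripleSeq_three_mul_add_two]
    exact (continuous_of_discreteTopology (f := Bool.toNat)).comp (continuous_apply (j + 1))

lemma tendsto_extremalCode (n : ℕ) :
    Tendsto (fun m => extremalCode m n) atTop (𝓝 (limitCode n)) := by
  refine ((continuous_tmSubst.iterate n).tendsto hatCode).comp (tendsto_pi_nhds.2 fun i => ?_)
  refine tendsto_const_nhds.congr' ((eventually_ge_atTop i).mono fun m hm => ?_)
  simp only [Nat.mod_eq_of_lt (show i < 2 * m + 1 by omega)]

end TripleSeq

/-- The sequence whose base is the critical base of period `3 * (2 * m + 1) * 2 ^ n`. -/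
def extremalSeq (m n : ℕ) : ℕ → ℕ := tripleSeq (extremalCode m n)

lemma tendsto_extremalSeq (n : ℕ) :
    Tendsto (fun m => extremalSeq m n) atTop (𝓝 (tripleSeq (limitCode n))) :=
  (continuous_tripleSeq.tendsto _).comp (tendsto_extremalCode n)

lemma extremalSeq_lt_extremalSeq {m m' : ℕ} (hm : 1 ≤ m) (h : m < m') (n : ℕ) :
    toLex (extremalSeq m' n) < toLex (extremalSeq m n) :=
  tripleSeq_lt_tripleSeq
    ((extremalCode_prefix (hm.trans h.le) n).1.trans (extremalCode_prefix hm n).1.symm)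
    (extremalCode_lt_extremalCode hm h n)

/-! ### Words over three letters -/

/-- The 0-1 sequence marking the places of the letter `c` in the word `w`. -/
def ind (c : Fin 3) (w : ℕ → Fin 3) : ℕ → ℕ := fun i => if w i = c then 1 else 0

/-- The word with letter `1` at the middle of each triple, in which the letter at place `3 * j`
is `2` or `0` according to `E j`, and the letter before it is the other one. Its indicator
sequences are the triple sequences of the normalized tails of `E`. -/
def tripleWord (E : ℕ → Bool) : ℕ → Fin 3 := fun i =>
  if i % 3 = 0 then (if E (i / 3) then 2 else 0)
  else if i % 3 = 1 then 1 else (if E (i / 3 + 1) then 0 else 2)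

section TripleWord

variable {E F : ℕ → Bool} {c : Fin 3} {w : ℕ → Fin 3} {i : ℕ}

lemma ind_of_eq (h : w i = c) : ind c w i = 1 := if_pos h

lemma ind_of_ne (h : w i ≠ c) : ind c w i = 0 := if_neg h

lemma ne_of_ind_eq_zero (h : ind c w i = 0) : w i ≠ c :=
  fun hc => one_ne_zero ((ind_of_eq hc).symm.trans h)

lemma isBinary_ind (c : Fin 3) (w : ℕ → Fin 3) : IsBinary (ind c w) := by
  intro i
  rw [ind]
  split_ifs <;> decide

lemma ind_comp_of_injective {σ : Fin 3 → Fin 3} (hσ : Function.Injective σ) (c : Fin 3)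
    (w : ℕ → Fin 3) : ind (σ c) (σ ∘ w) = ind c w :=
  funext fun i => by simp only [ind, Function.comp_apply, hσ.eq_iff]

lemma tripleWord_three_mul (E : ℕ → Bool) (j : ℕ) :
    tripleWord E (3 * j) = if E j then 2 else 0 := by
  simp [tripleWord]

lemma tripleWord_three_mul_add_one (E : ℕ → Bool) (j : ℕ) : tripleWord E (3 * j + 1) = 1 := by
  simp [tripleWord]

lemma tripleWord_three_mul_add_two (E : ℕ → Bool) (j : ℕ) :
    tripleWord E (3 * j + 2) = if E (j + 1) then 0 else 2 := by
  simp [tripleWord, Nat.mul_add_div]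

lemma tripleWord_eq_one_iff : tripleWord E i = 1 ↔ i % 3 = 1 := by
  obtain ⟨j, rfl | rfl | rfl⟩ := exists_eq_three_mul_add i
  · rw [tripleWord_three_mul]
    cases E j <;> simp
  · simp [tripleWord_three_mul_add_one]
  · rw [tripleWord_three_mul_add_two]
    cases E (j + 1) <;> simp

lemma shift_ind_tripleWord (E : ℕ → Bool) (i : ℕ) :
    shift (3 * i) (ind (tripleWord E (3 * i)) (tripleWord E)) = tripleSeq (normTail i E) := by
  funext k
  rw [tripleWord_three_mul]
  obtain ⟨j, rfl | rfl | rfl⟩ := exists_eq_three_mul_add k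
  · rw [shift, ← mul_add, ind, tripleWord_three_mul, tripleSeq_three_mul, normTail]
    cases E i <;> cases E (i + j) <;> rfl
  · rw [shift, ← add_assoc, ← mul_add, ind, tripleWord_three_mul_add_one,
      tripleSeq_three_mul_add_one]
    cases E i <;> rfl
  · rw [shift, ← add_assoc, ← mul_add, ind, tripleWord_three_mul_add_two,
      tripleSeq_three_mul_add_two, normTail, add_assoc]
    cases E i <;> cases E (i + (j + 1)) <;> rfl

lemma tripleSeq_eq_ind (h0 : E 0 = false) : tripleSeq E = ind 0 (tripleWord E) := by
  have hnorm : normTail 0 E = E := funext fun j => by simp [normTail, h0]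
  have hletter : tripleWord E (3 * 0) = 0 := by rw [tripleWord_three_mul, h0]; rfl
  have h := shift_ind_tripleWord E 0
  rw [hletter, hnorm] at h
  exact h.symm.trans (funext fun j => by rw [shift, mul_zero, zero_add])

lemma shift_ind_lt {a : ℕ → ℕ} (h0 : a 0 = 1) (h1 : a 1 = 0) (h2 : a 2 = 1)
    (h : w i = c → w (i + 1) ≠ c ∧ w (i + 2) ≠ c) :
    toLex (shift i (ind c w)) < toLex a := by
  by_cases hc : w i = c
  · obtain ⟨hc1, hc2⟩ := h hc
    refine ⟨2, fun j hj => ?_, ?_⟩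
    · interval_cases j
      · exact (ind_of_eq hc).trans h0.symm
      · exact (ind_of_ne hc1).trans h1.symm
    · exact (ind_of_ne hc2).trans_lt (one_pos.trans_eq h2.symm)
  · exact ⟨0, fun j hj => absurd hj (Nat.not_lt_zero j),
      (ind_of_ne hc).trans_lt (one_pos.trans_eq h0.symm)⟩

lemma shift_ind_tripleWord_le (h0 : F 0 = false) (h1 : F 1 = true)
    (h : ∀ i, toLex (normTail i E) ≤ toLex F) (c : Fin 3) (k : ℕ) :
    toLex (shift k (ind c (tripleWord E))) ≤ toLex (tripleSeq F) := by
  have hlt {k : ℕ} (hk : tripleWord E k = c →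
      tripleWord E (k + 1) ≠ c ∧ tripleWord E (k + 2) ≠ c) :
      toLex (shift k (ind c (tripleWord E))) ≤ toLex (tripleSeq F) :=
    (shift_ind_lt (by simp [tripleSeq, h0]) (by simp [tripleSeq]) (by simp [tripleSeq, h1]) hk).le
  obtain ⟨j, rfl | rfl | rfl⟩ := exists_eq_three_mul_add k
  · by_cases hc : tripleWord E (3 * j) = c
    · rw [← hc, shift_ind_tripleWord]
      exact tripleSeq_le_tripleSeq (by simp [normTail, h0]) (h j)
    · exact hlt fun h => absurd h hc
  · refine hlt ?_
    rintro rfl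
    rw [tripleWord_three_mul_add_one]
    constructor <;> rw [Ne, tripleWord_eq_one_iff] <;> omega
  · refine hlt ?_
    rintro rfl
    rw [show 3 * j + 2 + 1 = 3 * (j + 1) by ring, show 3 * j + 2 + 2 = 3 * (j + 1) + 1 by ring,
      tripleWord_three_mul, tripleWord_three_mul_add_one, tripleWord_three_mul_add_two]
    cases E (j + 1) <;> decide

lemma periodic_tripleWord_iff {q : ℕ} :
    Function.Periodic (tripleWord E) (3 * q) ↔ Function.Periodic E q := by
  refine ⟨fun h j => ?_, fun h i => ?_⟩
  · have hj := h (3 * j)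
    rw [← mul_add, tripleWord_three_mul, tripleWord_three_mul] at hj
    revert hj
    cases E (j + q) <;> cases E j <;> decide
  · have h' : E (i / 3 + q + 1) = E (i / 3 + 1) := by rw [add_right_comm, h]
    simp only [tripleWord, Nat.add_mul_mod_self_left, Nat.add_mul_div_left _ _ three_pos, h _, h']

lemma three_dvd_of_periodic_tripleWord {k : ℕ} (h : Function.Periodic (tripleWord E) k) :
    3 ∣ k := by
  have h1 := h 1
  rw [show tripleWord E 1 = 1 from rfl, tripleWord_eq_one_iff] at h1
  omega

lemma smallestPeriod_tripleWord_iff {q : ℕ} :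
    SmallestPeriod (tripleWord E) (3 * q) ↔ SmallestPeriod E q := by
  simp only [smallestPeriod_iff, periodic_tripleWord_iff]
  refine and_congr (by omega) (and_congr_right fun _ => ⟨fun h j hj hjq hper => ?_,
    fun h k hk hkq hper => ?_⟩)
  · exact h (3 * j) (by omega) (by omega) (periodic_tripleWord_iff.2 hper)
  · obtain ⟨j, rfl⟩ := three_dvd_of_periodic_tripleWord hper
    exact h j (by omega) (by omega) (periodic_tripleWord_iff.1 hper)

lemma exists_eq_tripleWord (hne : ∀ i, w i ≠ w (i + 1)) (hmid : ∀ j, w (3 * j + 1) = 1) :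
    ∃ E, w = tripleWord E := by
  have hstart : ∀ x : Fin 3, x ≠ 1 → x = if x = 2 then 2 else 0 := by decide
  have hend : ∀ x y : Fin 3, x ≠ 1 → y ≠ 1 → x ≠ y → x = if y = 2 then 0 else 2 := by decide
  have hne0 (j : ℕ) : w (3 * j) ≠ 1 := hmid j ▸ hne (3 * j)
  have hne2 (j : ℕ) : w (3 * j + 2) ≠ 1 := hmid j ▸ (hne (3 * j + 1)).symm
  refine ⟨fun j => decide (w (3 * j) = 2), funext fun i => ?_⟩
  obtain ⟨j, rfl | rfl | rfl⟩ := exists_eq_three_mul_add i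
  · rw [tripleWord_three_mul]
    simpa only [decide_eq_true_eq] using hstart _ (hne0 j)
  · rw [tripleWord_three_mul_add_one, hmid]
  · rw [tripleWord_three_mul_add_two]
    simpa only [decide_eq_true_eq] using hend _ _ (hne2 j) (hne0 (j + 1)) (hne (3 * j + 2))

end TripleWord

section ExtremalSeq

variable {m : ℕ}

lemma shift_ind_tripleWord_extremalCode_le (hm : 1 ≤ m) (n : ℕ) (c : Fin 3) (k : ℕ) :
    toLex (shift k (ind c (tripleWord (extremalCode m n)))) ≤ toLex (extremalSeq m n) := by
  obtain ⟨h0, h1, -⟩ := extremalCode_prefix hm n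
  exact shift_ind_tripleWord_le h0 h1 (normTail_extremalCode_le hm n) c k

lemma isShiftMaximal_extremalSeq (hm : 1 ≤ m) (n : ℕ) : IsShiftMaximal (extremalSeq m n) := by
  intro k
  conv_lhs => rw [extremalSeq, tripleSeq_eq_ind (extremalCode_prefix hm n).1]
  exact shift_ind_tripleWord_extremalCode_le hm n 0 k

lemma smallestPeriod_extremalCode (hm : 1 ≤ m) (n : ℕ) :
    SmallestPeriod (extremalCode m n) ((2 * m + 1) * 2 ^ n) := by
  refine smallestPeriod_iff.2 ⟨by positivity, periodic_extremalCode m n, fun j hj hjlt hper => ?_⟩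
  refine (normTail_extremalCode_lt hm (Nat.not_dvd_of_pos_of_lt hj hjlt)).ne ?_
  have h0 : extremalCode m n j = false := by
    rw [← zero_add j, hper, (extremalCode_prefix hm n).1]
  refine congrArg toLex (funext fun i => ?_)
  rw [normTail, h0, Bool.false_xor, add_comm, hper]

lemma smallestPeriod_tripleWord_extremalCode (hm : 1 ≤ m) (n : ℕ) :
    SmallestPeriod (tripleWord (extremalCode m n)) (3 * (2 * m + 1) * 2 ^ n) := by
  rw [mul_assoc, smallestPeriod_tripleWord_iff]
  exact smallestPeriod_extremalCode hm n

end ExtremalSeq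

/-! ### Every word of the given period reaches the extremal sequence -/

/-- The lexicographic form of membership in the univoque set: after a letter different from `c`,
the indicator sequence of `c` stays below `a`. -/
def LexUnivoque (a : ℕ → ℕ) (w : ℕ → Fin 3) : Prop :=
  ∀ i c, w i ≠ c → toLex (shift (i + 1) (ind c w)) < toLex a

/-- From each place on, the indicator sequence of the letter found there is below `a`. -/
def LettersBelow (a : ℕ → ℕ) (w : ℕ → Fin 3) : Prop :=
  ∀ i, toLex (shift i (ind (w i) w)) < toLex a

/-- The patterns which the initial digits `101001000` of `a` forbid in a word with
`LettersBelow a`. -/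
structure AvoidsPatterns (w : ℕ → Fin 3) : Prop where
  ne_succ (i : ℕ) : w i ≠ w (i + 1)
  ne_add_four (i : ℕ) : w i = w (i + 2) → w i ≠ w (i + 4)
  ne_add_seven (i : ℕ) : w i = w (i + 2) → w i = w (i + 5) → w i ≠ w (i + 7)
  ne_add_eight (i : ℕ) : w i = w (i + 2) → w i = w (i + 5) → w i ≠ w (i + 8)

section LowerBound

variable {a : ℕ → ℕ} {w : ℕ → Fin 3} {F : ℕ → Bool}

lemma digit_eq_zero_of_lt {x : ℕ → ℕ} (h : toLex x < toLex a) {j : ℕ} (hj : ∀ i < j, x i = a i)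
    (ha : a j = 0) : x j = 0 := by
  by_contra hc
  exact h.not_gt ⟨j, fun i hi => (hj i hi).symm, ha.trans_lt (Nat.pos_of_ne_zero hc)⟩

protected lemma LettersBelow.shift (h : LettersBelow a w) (n : ℕ) : LettersBelow a (shift n w) :=
  fun i => shift_shift i n (ind (w (n + i)) w) ▸ h (n + i)

lemma LettersBelow.comp_of_injective (h : LettersBelow a w) {σ : Fin 3 → Fin 3}
    (hσ : Function.Injective σ) : LettersBelow a (σ ∘ w) :=
  fun i => by simpa only [Function.comp_apply, ind_comp_of_injective hσ] using h i

lemma LexUnivoque.eq_of_eq_succ (h : LexUnivoque a w) (h0 : a 0 = 1) (h1 : a 1 = 0) {i : ℕ}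
    (hi : w (i + 1) = w (i + 2)) : w i = w (i + 1) := by
  by_contra hc
  refine ne_of_ind_eq_zero (digit_eq_zero_of_lt (h i _ hc) (fun j hj => ?_) h1) hi.symm
  rw [Nat.lt_one_iff.1 hj, h0]
  exact ind_of_eq rfl

lemma LexUnivoque.ne_succ (h : LexUnivoque a w) (h0 : a 0 = 1) (h1 : a 1 = 0) {p : ℕ}
    (hp0 : 0 < p) (hp : Function.Periodic w p) (hnp : ¬Function.Periodic w 1) (i : ℕ) :
    w i ≠ w (i + 1) := by
  intro hi
  have hback (j : ℕ) {i : ℕ} (hij : w (i + j) = w (i + j + 1)) : w i = w (i + 1) := by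
    induction j with
    | zero => exact hij
    | succ j ih => exact ih (h.eq_of_eq_succ h0 h1 hij)
  refine hnp fun k => ?_
  obtain ⟨l, hl⟩ : ∃ l, k + l = i + k * p :=
    ⟨i + k * p - k, Nat.add_sub_of_le ((Nat.le_mul_of_pos_right k hp0).trans (Nat.le_add_left _ _))⟩
  have hper : Function.Periodic w (k * p) := hp.nat_mul k
  refine (hback l ?_).symm
  rw [hl, hper, add_right_comm, hper, hi]

lemma LexUnivoque.lettersBelow (h : LexUnivoque a w) (hne : ∀ i, w i ≠ w (i + 1)) :
    LettersBelow a (shift 1 w) := by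
  intro i
  have hlt := h i _ (hne i)
  rw [add_comm] at hlt
  exact shift_shift i 1 (ind (w (1 + i)) w) ▸ hlt

lemma LettersBelow.avoidsPatterns (h : LettersBelow (tripleSeq F) w)
    (hF : F 0 = false ∧ F 1 = true ∧ F 2 = true ∧ F 3 = false) (hne : ∀ i, w i ≠ w (i + 1)) :
    AvoidsPatterns w := by
  obtain ⟨a0, a1, a2, a3, a4, a5, a6, a7, a8⟩ := tripleSeq_prefix hF
  have prefix_four (i : ℕ) (h2 : w i = w (i + 2)) :
      ∀ j < 4, shift i (ind (w i) w) j = tripleSeq F j := by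
    intro j hj
    interval_cases j
    · exact (ind_of_eq rfl).trans a0.symm
    · exact (ind_of_ne (hne i).symm).trans a1.symm
    · exact (ind_of_eq h2.symm).trans a2.symm
    · exact (ind_of_ne (h2.trans_ne (hne (i + 2))).symm).trans a3.symm
  have digit_four (i : ℕ) (h2 : w i = w (i + 2)) : shift i (ind (w i) w) 4 = 0 :=
    digit_eq_zero_of_lt (h i) (prefix_four i h2) a4
  have prefix_seven (i : ℕ) (h2 : w i = w (i + 2)) (h5 : w i = w (i + 5)) :
      ∀ j < 7, shift i (ind (w i) w) j = tripleSeq F j := by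
    intro j hj
    rcases Nat.lt_or_ge j 4 with hj4 | hj4
    · exact prefix_four i h2 j hj4
    interval_cases j
    · exact (digit_four i h2).trans a4.symm
    · exact (ind_of_eq h5.symm).trans a5.symm
    · exact (ind_of_ne (h5.trans_ne (hne (i + 5))).symm).trans a6.symm
  have digit_seven (i : ℕ) (h2 : w i = w (i + 2)) (h5 : w i = w (i + 5)) :
      shift i (ind (w i) w) 7 = 0 :=
    digit_eq_zero_of_lt (h i) (prefix_seven i h2 h5) a7
  refine ⟨hne, fun i h2 => (ne_of_ind_eq_zero (digit_four i h2)).symm,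
    fun i h2 h5 => (ne_of_ind_eq_zero (digit_seven i h2 h5)).symm,
    fun i h2 h5 => (ne_of_ind_eq_zero (digit_eq_zero_of_lt (h i) (fun j hj => ?_) a8)).symm⟩
  rcases (Nat.lt_succ_iff.1 hj).lt_or_eq with hj | rfl
  · exact prefix_seven i h2 h5 j hj
  · exact (digit_seven i h2 h5).trans a7.symm

lemma eq_of_ne_of_ne {x y z z' : Fin 3} (hxy : x ≠ y) (hx : z ≠ x) (hy : z ≠ y) (hx' : z' ≠ x)
    (hy' : z' ≠ y) : z = z' := by
  omega

lemma exists_eq_add_two_of_not_periodic (hne : ∀ i, w i ≠ w (i + 1))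
    (h3 : ¬Function.Periodic w 3) : ∃ i, w i = w (i + 2) := by
  by_contra! hc
  exact h3 fun i => eq_of_ne_of_ne (hne (i + 1)) (hc (i + 1)).symm (hne (i + 2)).symm
    (hne i) (hc i)

lemma AvoidsPatterns.add_six_eq_add_eight (h : AvoidsPatterns w) {i : ℕ}
    (h2 : w i = w (i + 2)) (h5 : w i = w (i + 5)) : w (i + 6) = w (i + 8) :=
  eq_of_ne_of_ne (h.ne_add_seven i h2 h5) (h5.trans_ne (h.ne_succ (i + 5))).symm
    (h.ne_succ (i + 6)) (h.ne_add_eight i h2 h5).symm (h.ne_succ (i + 7)).symm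

lemma AvoidsPatterns.add_six_ne_add_four (h : AvoidsPatterns w) {i : ℕ}
    (h2 : w i = w (i + 2)) (h5 : w i = w (i + 5)) : w (i + 6) ≠ w (i + 4) :=
  fun h46 => h.ne_add_four (i + 4) h46.symm (h46.symm.trans (h.add_six_eq_add_eight h2 h5))

lemma AvoidsPatterns.add_one_ne_add_three (h : AvoidsPatterns w) {i : ℕ}
    (h2 : w i = w (i + 2)) : w (i + 1) ≠ w (i + 3) := by
  intro h3
  have h01 : w i ≠ w (i + 1) := h.ne_succ i
  have h04 : w i ≠ w (i + 4) := h.ne_add_four i h2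
  have h14 : w (i + 1) ≠ w (i + 4) := h3.trans_ne (h.ne_succ (i + 3))
  have h5 : w i = w (i + 5) :=
    eq_of_ne_of_ne h14 h01 h04 (h.ne_add_four (i + 1) h3).symm (h.ne_succ (i + 4)).symm
  have h6 : w (i + 1) = w (i + 6) :=
    eq_of_ne_of_ne h04 h01.symm h14 (h5.trans_ne (h.ne_succ (i + 5))).symm
      (h.add_six_ne_add_four h2 h5)
  exact h.ne_add_seven (i + 1) h3 h6 (h6.trans (h.add_six_eq_add_eight h2 h5))

lemma AvoidsPatterns.add_four_eq (h : AvoidsPatterns w) {i : ℕ} (hi : w i = w (i + 2)) :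
    w (i + 4) = w (i + 1) :=
  eq_of_ne_of_ne (hi.trans_ne (h.ne_succ (i + 2))) (h.ne_add_four i hi).symm
    (h.ne_succ (i + 3)).symm (h.ne_succ i).symm (h.add_one_ne_add_three hi)

lemma AvoidsPatterns.add_three_eq_or (h : AvoidsPatterns w) {i : ℕ} (h2 : w i = w (i + 2)) :
    w (i + 3) = w (i + 5) ∨ w (i + 6) = w (i + 8) ∧ w (i + 7) = w (i + 1) := by
  refine or_iff_not_imp_left.2 fun h35 => ?_
  have h03 : w i ≠ w (i + 3) := h2.trans_ne (h.ne_succ (i + 2))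
  have h4 : w (i + 4) = w (i + 1) := h.add_four_eq h2
  have h5 : w i = w (i + 5) :=
    eq_of_ne_of_ne (h.ne_succ (i + 3)) h03 (h.ne_add_four i h2) (Ne.symm h35)
      (h.ne_succ (i + 4)).symm
  have h06 : w i ≠ w (i + 6) := h5.trans_ne (h.ne_succ (i + 5))
  refine ⟨h.add_six_eq_add_eight h2 h5, ?_⟩
  exact eq_of_ne_of_ne h06 (h.ne_add_seven i h2 h5).symm (h.ne_succ (i + 6)).symm
    (h.ne_succ i).symm (h4.symm.trans_ne (h.add_six_ne_add_four h2 h5).symm)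

lemma AvoidsPatterns.middle_eq (h : AvoidsPatterns w) {i : ℕ} (hi : w i = w (i + 2)) (j : ℕ) :
    w (i + 3 * j + 1) = w (i + 1) := by
  have hinv (j : ℕ) : w (i + 3 * j + 1) = w (i + 1) ∧ (w (i + 3 * j) = w (i + 3 * j + 2) ∨
      w (i + 3 * j + 3) = w (i + 3 * j + 5) ∧ w (i + 3 * j + 4) = w (i + 1)) := by
    induction j with
    | zero => exact ⟨rfl, .inl hi⟩
    | succ j ih =>
      rw [show i + 3 * (j + 1) = i + 3 * j + 3 by ring]
      obtain ⟨hmid, hflip | ⟨hflip, hmid'⟩⟩ := ih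
      · refine ⟨(h.add_four_eq hflip).trans hmid, ?_⟩
        exact (h.add_three_eq_or hflip).imp_right (And.imp_right fun h7 => h7.trans hmid)
      · exact ⟨hmid', .inl hflip⟩
  exact (hinv j).1

lemma AvoidsPatterns.exists_comp_eq_tripleWord (h : AvoidsPatterns w)
    (h3 : ¬Function.Periodic w 3) :
    ∃ (i : ℕ) (σ : Equiv.Perm (Fin 3)) (E : ℕ → Bool), σ ∘ shift i w = tripleWord E := by
  obtain ⟨i, hi⟩ := exists_eq_add_two_of_not_periodic h.ne_succ h3
  let σ := Equiv.swap (w (i + 1)) 1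
  refine ⟨i, σ, exists_eq_tripleWord (fun j => ?_) fun j => ?_⟩
  · exact σ.injective.ne (h.ne_succ (i + j))
  · rw [Function.comp_apply, shift, ← add_assoc, h.middle_eq hi, Equiv.swap_apply_left]

variable {m : ℕ}

theorem not_lettersBelow_extremalSeq (hm : 1 ≤ m) (n : ℕ) (hne : ∀ i, w i ≠ w (i + 1))
    (hw : SmallestPeriod w (3 * ((2 * m + 1) * 2 ^ n))) :
    ¬LettersBelow (extremalSeq m n) w := by
  intro hlt
  have hpref := extremalCode_prefix hm n
  have hpow : 2 ^ n < (2 * m + 1) * 2 ^ n := lt_mul_of_one_lt_left (by positivity) (by omega)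
  have hone : 1 ≤ 2 ^ n := Nat.one_le_two_pow
  have h3 : ¬Function.Periodic w 3 := (smallestPeriod_iff.1 hw).2.2 3 three_pos (by omega)
  obtain ⟨i₀, σ, E, hσ⟩ := (hlt.avoidsPatterns hpref hne).exists_comp_eq_tripleWord h3
  have hE : SmallestPeriod E ((2 * m + 1) * 2 ^ n) := by
    rw [← smallestPeriod_tripleWord_iff, ← hσ, smallestPeriod_comp_iff σ.injective]
    exact hw.shift i₀
  obtain ⟨-, hper, hmin⟩ := smallestPeriod_iff.1 hE
  obtain ⟨i, hi⟩ := exists_extremalCode_le_normTail hm hper (hmin _ (by positivity) hpow)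
  have hlt' := hσ ▸ (hlt.shift i₀).comp_of_injective σ.injective
  refine (hlt' (3 * i)).not_ge ?_
  rw [shift_ind_tripleWord]
  exact tripleSeq_le_tripleSeq (by simp [normTail, hpref.1]) hi

theorem not_lexUnivoque_extremalSeq (hm : 1 ≤ m) (n : ℕ)
    (hw : SmallestPeriod w (3 * (2 * m + 1) * 2 ^ n)) : ¬LexUnivoque (extremalSeq m n) w := by
  intro h
  rw [mul_assoc] at hw
  obtain ⟨hp, hper, hmin⟩ := smallestPeriod_iff.1 hw
  obtain ⟨a0, a1, -⟩ := tripleSeq_prefix (extremalCode_prefix hm n)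
  have hne := h.ne_succ a0 a1 hp hper (hmin 1 one_pos (by omega))
  refine not_lettersBelow_extremalSeq hm n (fun i => hne (1 + i)) (hw.shift 1) ?_
  exact h.lettersBelow hne

end LowerBound

/-! ### Barycentric coordinates on `Δ_β` -/

/-- The digits of `Ω`, indexed by the letters `0`, `1`, `2`. -/
def vertex : Fin 3 → ℝ × ℝ := ![(0, 0), (1, 0), (0, 1)]

lemma vertex_mem_OmegaR (k : Fin 3) : vertex k ∈ OmegaR := by
  fin_cases k <;> simp [vertex, OmegaR]

lemma exists_eq_vertex {p : ℝ × ℝ} (hp : p ∈ OmegaR) : ∃ k, p = vertex k := by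
  rcases hp with h | h | h
  exacts [⟨0, h⟩, ⟨1, h⟩, ⟨2, h⟩]

lemma vertex_injective : Function.Injective vertex := by
  intro a b h
  fin_cases a <;> fin_cases b <;> simp [vertex] at h ⊢

/-- The barycentric coordinates of `y` with respect to the triangle with vertices `(0, 0)`,
`(1 / (β - 1), 0)` and `(0, 1 / (β - 1))`, normalised to have sum `1 / (β - 1)`: the `k`-th
coordinate of a coded point is then the value of the indicator sequence of the letter `k`. -/
def baryCoord (β : ℝ) (k : Fin 3) (y : ℝ × ℝ) : ℝ :=
  ![1 / (β - 1) - y.1 - y.2, y.1, y.2] k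

/-- The point of the gasket coded by the word `w`. -/
def codedPoint (β : ℝ) (w : ℕ → Fin 3) : ℝ × ℝ := ∑' i : ℕ, (β ^ (i + 1))⁻¹ • vertex (w i)

lemma sum_ind (w : ℕ → Fin 3) (i : ℕ) : ∑ k, ind k w i = 1 := by
  simp [ind]

lemma vertex_apply (w : ℕ → Fin 3) (i : ℕ) :
    vertex (w i) = ((ind 1 w i : ℝ), (ind 2 w i : ℝ)) := by
  simp only [ind]
  generalize w i = k
  fin_cases k <;> simp [vertex]

section Geometry

variable {β : ℝ}

lemma codedPoint_eq (hβ : 1 < β) (w : ℕ → Fin 3) :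
    codedPoint β w = (value β (ind 1 w), value β (ind 2 w)) := by
  have hsum := ((isBinary_ind 1 w).summable hβ).hasSum.prodMk
    ((isBinary_ind 2 w).summable hβ).hasSum
  refine HasSum.tsum_eq (hsum.congr_fun fun i => ?_)
  simp [vertex_apply, div_eq_inv_mul]

lemma sum_value_ind (hβ : 1 < β) (w : ℕ → Fin 3) : ∑ k, value β (ind k w) = 1 / (β - 1) := by
  refine (hasSum_sum fun k _ => ((isBinary_ind k w).summable hβ).hasSum).unique ?_
  convert hasSum_one_div_pow_succ hβ using 2 with i
  rw [← Finset.sum_div, ← Nat.cast_sum, sum_ind, Nat.cast_one]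

lemma baryCoord_codedPoint (hβ : 1 < β) (w : ℕ → Fin 3) (k : Fin 3) :
    baryCoord β k (codedPoint β w) = value β (ind k w) := by
  have hsum := sum_value_ind hβ w
  rw [Fin.sum_univ_three] at hsum
  rw [codedPoint_eq hβ]
  fin_cases k
  · simp only [baryCoord, Fin.zero_eta, Matrix.cons_val_zero]
    linarith
  · rfl
  · rfl

lemma baryCoord_smul_add_smul (k : Fin 3) (x y : ℝ × ℝ) {a b : ℝ} (hab : a + b = 1) :
    baryCoord β k (a • x + b • y) = a * baryCoord β k x + b * baryCoord β k y := by
  fin_cases k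
  · simp only [baryCoord, Fin.zero_eta, Matrix.cons_val_zero, Prod.fst_add, Prod.snd_add,
      Prod.smul_fst, Prod.smul_snd, smul_eq_mul]
    linear_combination (-(1 / (β - 1))) * hab
  · rfl
  · rfl

lemma sum_baryCoord (y : ℝ × ℝ) : ∑ k, baryCoord β k y = 1 / (β - 1) := by
  simp only [Fin.sum_univ_three, baryCoord, Matrix.cons_val]
  ring

lemma Sfat_eq_range : Sfat β = range (codedPoint β) := by
  ext x
  constructor
  · rintro ⟨d, hd, rfl⟩
    choose w hw using fun i => exists_eq_vertex (hd i)
    exact ⟨w, by simp only [codedPoint, hw]⟩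
  · rintro ⟨w, rfl⟩
    exact ⟨vertex ∘ w, fun i => vertex_mem_OmegaR _, rfl⟩

lemma codedPoint_const (hβ : 1 < β) (k : Fin 3) :
    codedPoint β (fun _ => k) = (1 / (β - 1)) • vertex k := by
  have h : HasSum (fun i : ℕ => (β ^ (i + 1))⁻¹ • vertex k) ((1 / (β - 1)) • vertex k) := by
    simpa only [one_div] using (hasSum_one_div_pow_succ hβ).smul_const (vertex k)
  exact h.tsum_eq

lemma sum_baryCoord_smul_vertex (y : ℝ × ℝ) : ∑ k, baryCoord β k y • vertex k = y := by
  ext <;> simp [Fin.sum_univ_three, baryCoord, vertex]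

lemma Delta_eq (hβ : 1 < β) : Delta β = {y | ∀ k, 0 ≤ baryCoord β k y} := by
  have hpos : 0 < β - 1 := sub_pos.2 hβ
  apply Subset.antisymm
  · refine convexHull_min ?_ fun x hx y hy a b ha hb hab k => ?_
    · rw [Sfat_eq_range]
      rintro _ ⟨w, rfl⟩ k
      rw [baryCoord_codedPoint hβ]
      exact value_nonneg hβ _
    · rw [baryCoord_smul_add_smul k x y hab]
      exact add_nonneg (mul_nonneg ha (hx k)) (mul_nonneg hb (hy k))
  · intro y hy
    have hmem (k : Fin 3) : (1 / (β - 1)) • vertex k ∈ Delta β := by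
      rw [← codedPoint_const hβ]
      exact subset_convexHull ℝ _ (Sfat_eq_range ▸ mem_range_self _)
    have hweights : ∑ k, (β - 1) * baryCoord β k y = 1 := by
      rw [← Finset.mul_sum, sum_baryCoord, mul_one_div_cancel hpos.ne']
    have hcomb := (convex_convexHull ℝ (Sfat β)).sum_mem
      (fun k _ => mul_nonneg hpos.le (hy k)) hweights fun k _ => hmem k
    rw [Delta]
    simpa only [smul_smul, mul_right_comm _ _ (1 / (β - 1)), mul_one_div_cancel hpos.ne', one_mul,
      sum_baryCoord_smul_vertex] using hcomb

/-! ### The overlap region and the univoque set in terms of codings -/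

lemma baryCoord_fmap (hβ : 1 < β) (k l : Fin 3) (y : ℝ × ℝ) :
    β * baryCoord β k (fmap β (vertex l) y) = baryCoord β k y + if l = k then 1 else 0 := by
  have h1 : β - 1 ≠ 0 := (sub_pos.2 hβ).ne'
  have h2 : β ≠ 0 := by positivity
  fin_cases k <;> fin_cases l <;> simp [baryCoord, fmap, vertex] <;> field_simp <;> ring

lemma mem_fmap_image_iff (hβ : 1 < β) (l : Fin 3) (x : ℝ × ℝ) :
    x ∈ fmap β (vertex l) '' Delta β ↔ ∀ k, (if l = k then 1 else 0) ≤ β * baryCoord β k x := by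
  have hmem (y : ℝ × ℝ) : y ∈ Delta β ↔
      ∀ k, (if l = k then 1 else 0) ≤ β * baryCoord β k (fmap β (vertex l) y) := by
    simp only [Delta_eq hβ, mem_ofPred_eq, baryCoord_fmap hβ, le_add_iff_nonneg_left]
  constructor
  · rintro ⟨y, hy, rfl⟩
    exact (hmem y).1 hy
  · intro h
    have hx : fmap β (vertex l) (β • x - vertex l) = x := by
      rw [fmap, sub_add_cancel, inv_smul_smul₀ (by positivity)]
    exact ⟨_, (hmem _).2 (by rwa [hx]), hx⟩

lemma mul_baryCoord_codedPoint (hβ : 1 < β) (w : ℕ → Fin 3) (k : Fin 3) :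
    β * baryCoord β k (codedPoint β w) = ind k w 0 + value β (shift 1 (ind k w)) := by
  rw [baryCoord_codedPoint hβ, (isBinary_ind k w).value_eq_head_add hβ,
    mul_inv_cancel_left₀ (by positivity)]

lemma codedPoint_mem_fmap_image_iff (hβ : 1 < β) (w : ℕ → Fin 3) (l : Fin 3) :
    codedPoint β w ∈ fmap β (vertex l) '' Delta β ↔
      w 0 = l ∨ 1 ≤ value β (shift 1 (ind l w)) := by
  simp only [mem_fmap_image_iff hβ, mul_baryCoord_codedPoint hβ]
  have hnonneg (k : Fin 3) : 0 ≤ value β (shift 1 (ind k w)) := value_nonneg hβ _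
  refine ⟨fun h => or_iff_not_imp_left.2 fun hl => ?_, fun h k => ?_⟩
  · simpa [ind_of_ne hl] using h l
  · split_ifs with hk
    · subst hk
      rcases h with h | h
      · simpa [ind_of_eq h] using hnonneg l
      · exact le_add_of_nonneg_of_le (Nat.cast_nonneg _) h
    · exact add_nonneg (Nat.cast_nonneg _) (hnonneg k)

lemma codedPoint_mem_Ofat_iff (hβ : 1 < β) (w : ℕ → Fin 3) :
    codedPoint β w ∈ Ofat β ↔ ∃ k, w 0 ≠ k ∧ 1 ≤ value β (shift 1 (ind k w)) := by
  simp only [Ofat, mem_iUnion]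
  constructor
  · rintro ⟨c, hc, d, hd, hcd, hmem⟩
    obtain ⟨k, rfl⟩ := exists_eq_vertex hc
    obtain ⟨l, rfl⟩ := exists_eq_vertex hd
    rw [mem_inter_iff, codedPoint_mem_fmap_image_iff hβ, codedPoint_mem_fmap_image_iff hβ] at hmem
    by_cases hk : w 0 = k
    · have hl : w 0 ≠ l := fun hl => hcd (by rw [← hk, hl])
      exact ⟨l, hl, hmem.2.resolve_left hl⟩
    · exact ⟨k, hk, hmem.1.resolve_left hk⟩
  · rintro ⟨k, hk, hval⟩
    exact ⟨vertex (w 0), vertex_mem_OmegaR _, vertex k, vertex_mem_OmegaR _,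
      vertex_injective.ne hk, (codedPoint_mem_fmap_image_iff hβ w _).2 (.inl rfl),
      (codedPoint_mem_fmap_image_iff hβ w k).2 (.inr hval)⟩

lemma vertex_comp_mem_Ufat_iff (hβ : 1 < β) (w : ℕ → Fin 3) :
    vertex ∘ w ∈ Ufat β ↔ ∀ n k, w n ≠ k → value β (shift (n + 1) (ind k w)) < 1 := by
  have hshift (n : ℕ) (k : Fin 3) : shift 1 (ind k (shift n w)) = shift (n + 1) (ind k w) :=
    shift_shift 1 n (ind k w)
  have hOfat (n : ℕ) : (∑' i : ℕ, (β ^ (i + 1))⁻¹ • (vertex ∘ w) (n + i)) ∉ Ofat β ↔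
      ∀ k, w n ≠ k → value β (shift (n + 1) (ind k w)) < 1 := by
    change codedPoint β (shift n w) ∉ Ofat β ↔ _
    simp only [codedPoint_mem_Ofat_iff hβ, hshift, not_exists, not_and, not_le]
    rfl
  simp only [Ufat, mem_ofPred_eq, hOfat]
  exact and_iff_right fun i => vertex_mem_OmegaR _

end Geometry

/-! ### The critical bases -/

/-- The bases whose univoque set contains a sequence of smallest period `k`. -/
def periodBases (k : ℕ) : Set ℝ := {β | β ∈ Ioc 1 2 ∧ ∃ d ∈ Ufat β, SmallestPeriod d k}

lemma mem_periodBases_iff {β : ℝ} {k : ℕ} : β ∈ periodBases k ↔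
    β ∈ Ioc 1 2 ∧ ∃ w : ℕ → Fin 3, vertex ∘ w ∈ Ufat β ∧ SmallestPeriod w k := by
  refine and_congr_right fun _ => ⟨?_, ?_⟩
  · rintro ⟨d, hd, hk⟩
    choose w hw using fun i => exists_eq_vertex (hd.1 i)
    obtain rfl : d = vertex ∘ w := funext hw
    exact ⟨w, hd, (smallestPeriod_comp_iff vertex_injective).1 hk⟩
  · rintro ⟨w, hw, hk⟩
    exact ⟨vertex ∘ w, hw, (smallestPeriod_comp_iff vertex_injective).2 hk⟩

section CriticalBases

variable {m n : ℕ} {β₀ β : ℝ}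

lemma le_of_mem_periodBases (hm : 1 ≤ m) (hβ₀ : SumsToOne β₀ (extremalSeq m n))
    (hβ : β ∈ periodBases (3 * (2 * m + 1) * 2 ^ n)) : β₀ ≤ β := by
  obtain ⟨⟨h1, -⟩, w, hw, hper⟩ := mem_periodBases_iff.1 hβ
  by_contra! hlt
  refine not_lexUnivoque_extremalSeq hm n hper fun i c hc => ?_
  exact lt_of_value_lt_one h1 hlt.le (isBinary_tripleSeq _) ((isBinary_ind c w).shift _) hβ₀
    (isShiftMaximal_extremalSeq hm n) ((vertex_comp_mem_Ufat_iff h1 w).1 hw i c hc)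

lemma mem_periodBases (hm : 1 ≤ m) (h1 : 1 < β₀) (hβ₀ : SumsToOne β₀ (extremalSeq m n))
    (hβ : β ∈ Ioc β₀ 2) : β ∈ periodBases (3 * (2 * m + 1) * 2 ^ n) := by
  have h1' : 1 < β := h1.trans hβ.1
  refine mem_periodBases_iff.2 ⟨⟨h1', hβ.2⟩, tripleWord (extremalCode m n),
    (vertex_comp_mem_Ufat_iff h1' _).2 fun i c _ => ?_, smallestPeriod_tripleWord_extremalCode hm n⟩
  set x := ind c (tripleWord (extremalCode m n))
  have hx : IsBinary x := isBinary_ind _ _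
  have hle : value β₀ (shift (i + 1) x) ≤ 1 :=
    value_shift_le_one h1 hx (isBinary_tripleSeq _) hβ₀.le
      (shift_ind_tripleWord_extremalCode_le hm n c) (i + 1)
  by_cases h0 : ∃ j, shift (i + 1) x j ≠ 0
  · exact ((hx.shift _).strictAntiOn_value h0 h1 h1' hβ.1).trans_le hle
  · push Not at h0
    simp [value, h0]

lemma betaK_eq (hm : 1 ≤ m) (hI : β₀ ∈ Ioo 1 2) (hβ₀ : SumsToOne β₀ (extremalSeq m n)) :
    betaK (3 * (2 * m + 1) * 2 ^ n) = β₀ := by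
  have hlower : β₀ ∈ lowerBounds (periodBases (3 * (2 * m + 1) * 2 ^ n)) :=
    fun β => le_of_mem_periodBases hm hβ₀
  have hsub : Ioc β₀ 2 ⊆ periodBases (3 * (2 * m + 1) * 2 ^ n) :=
    fun β => mem_periodBases hm hI.1 hβ₀
  have hglb : IsGLB (periodBases (3 * (2 * m + 1) * 2 ^ n)) β₀ :=
    ⟨hlower, fun b hb => (isGLB_Ioc hI.2).2 (lowerBounds_mono_set hsub hb)⟩
  exact hglb.csInf_eq ((nonempty_Ioc.2 hI.2).mono hsub)

lemma betaK_mem_Ioo_and_sumsToOne (hm : 1 ≤ m) (n : ℕ) :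
    betaK (3 * (2 * m + 1) * 2 ^ n) ∈ Ioo 1 2 ∧
      SumsToOne (betaK (3 * (2 * m + 1) * 2 ^ n)) (extremalSeq m n) := by
  have hprefix := tripleSeq_prefix (extremalCode_prefix hm n)
  obtain ⟨β₀, hI, hβ₀⟩ := exists_value_eq_one (isBinary_tripleSeq (extremalCode m n))
    (show 0 ≠ 2 by decide) hprefix.1 hprefix.2.2.1 hprefix.2.1
  rw [betaK_eq hm hI hβ₀]
  exact ⟨hI, hβ₀⟩

end CriticalBases

theorem strictAntiOn_betaK (n : ℕ) :
    StrictAntiOn (fun m => betaK (3 * (2 * m + 1) * 2 ^ n)) (Ici 1) := by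
  intro m hm m' hm' hlt
  obtain ⟨hI, hsum⟩ := betaK_mem_Ioo_and_sumsToOne hm n
  obtain ⟨hI', hsum'⟩ := betaK_mem_Ioo_and_sumsToOne hm' n
  exact base_lt_base hI'.1 hI.1 (isBinary_tripleSeq _) (isBinary_tripleSeq _) hsum' hsum
    (isShiftMaximal_extremalSeq hm' n) (notEndInZeros_tripleSeq _)
    (extremalSeq_lt_extremalSeq hm hlt n)

/-! ### The Thue–Morse sequence -/

/-- The Thue–Morse sequence: the parity of the sum of the binary digits. -/
def thueMorse (i : ℕ) : Bool := decide (Odd (Nat.digits 2 i).sum)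

lemma thueMorse_zero : thueMorse 0 = false := by simp [thueMorse]

lemma thueMorse_one : thueMorse 1 = true := by simp [thueMorse]

lemma tmSubst_thueMorse : tmSubst thueMorse = thueMorse := by
  funext i
  rcases eq_or_ne i 0 with rfl | hi
  · exact tmSubst_two_mul thueMorse 0
  · rw [tmSubst, thueMorse, thueMorse, Nat.digits_def' one_lt_two (Nat.pos_of_ne_zero hi),
      List.sum_cons]
    rcases Nat.mod_two_eq_zero_or_one i with h | h <;> simp [h, Nat.odd_add, ← Nat.not_odd_iff_even]

lemma iterate_tmSubst_apply (n : ℕ) (E : ℕ → Bool) (i : ℕ) :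
    tmSubst^[n] E i = xor (E (i / 2 ^ n)) (thueMorse (i % 2 ^ n)) := by
  induction n generalizing i with
  | zero => simp [Nat.mod_one, thueMorse_zero]
  | succ n ih =>
    have hmod : thueMorse (i % 2 ^ (n + 1)) =
        xor (thueMorse (i / 2 % 2 ^ n)) (decide (i % 2 = 1)) := by
      conv_lhs => rw [← tmSubst_thueMorse]
      rw [tmSubst, pow_succ', Nat.mod_mul_right_div_self, Nat.mod_mul_right_mod]
    rw [Function.iterate_succ_apply', tmSubst, ih, Nat.div_div_eq_div_mul, ← pow_succ', hmod,
      Bool.xor_assoc]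

lemma thueMorse_eq_xor (n i : ℕ) :
    thueMorse i = xor (thueMorse (i / 2 ^ n)) (thueMorse (i % 2 ^ n)) := by
  rw [← iterate_tmSubst_apply, Function.iterate_fixed tmSubst_thueMorse]

lemma thueMorse_two_pow_add {n i : ℕ} (hi : i < 2 ^ n) : thueMorse (2 ^ n + i) = !thueMorse i := by
  rw [thueMorse_eq_xor n, Nat.add_div_left _ (by positivity), Nat.div_eq_of_lt hi,
    Nat.add_mod_left, Nat.mod_eq_of_lt hi, thueMorse_one, Bool.true_xor]

lemma thueMorse_two_pow (n : ℕ) : thueMorse (2 ^ n) = true :=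
  (thueMorse_two_pow_add (by positivity : 0 < 2 ^ n)).trans (by rw [thueMorse_zero]; rfl)

lemma limitCode_of_lt {n i : ℕ} (hi : i < 2 ^ (n + 1)) : limitCode n i = thueMorse i := by
  have hdiv : i / 2 ^ n < 2 := Nat.div_lt_of_lt_mul (by rwa [← pow_succ])
  rw [limitCode, iterate_tmSubst_apply, thueMorse_eq_xor n i]
  interval_cases i / 2 ^ n <;> simp [hatCode, thueMorse_zero, thueMorse_one]

lemma limitCode_of_le {n i : ℕ} (hi : 2 ^ (n + 1) ≤ i) :
    limitCode n i = !thueMorse (i % 2 ^ (n + 1)) := by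
  have hdiv : 2 ≤ i / 2 ^ n := (Nat.le_div_iff_mul_le (by positivity)).2 (by rwa [← pow_succ'])
  rw [limitCode, iterate_tmSubst_apply, thueMorse_eq_xor n (i % 2 ^ (n + 1)), pow_succ,
    Nat.mod_mul_right_div_self, Nat.mod_mul_right_mod, ← Bool.not_xor]
  congr 1
  generalize i / 2 ^ n = q at hdiv
  rcases Nat.mod_two_eq_zero_or_one q with h | h
  · simp [hatCode, h, thueMorse_zero, show q ≠ 0 by omega]
  · simp [hatCode, h, thueMorse_one, show q ≠ 1 by omega]

lemma shift_limitCode (n : ℕ) :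
    shift (2 ^ (n + 1)) (limitCode n) = fun j => !thueMorse (j % 2 ^ (n + 1)) :=
  funext fun j => by rw [shift, limitCode_of_le (Nat.le_add_right _ _), Nat.add_mod_left]

/-! ### The blocks `t_n` and the limit sequence -/

lemma shift_tripleSeq (k : ℕ) (E : ℕ → Bool) :
    shift (3 * k) (tripleSeq E) = tripleSeq (shift k E) := by
  funext i
  simp only [shift, tripleSeq, Nat.mul_add_mod, Nat.mul_add_div three_pos, add_assoc]

lemma periodic_tripleSeq {E : ℕ → Bool} {p : ℕ} (hE : Function.Periodic E p) :
    Function.Periodic (tripleSeq E) (3 * p) := by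
  have hshift : shift p E = E := funext fun i => by rw [shift, add_comm, hE]
  intro i
  have h := congrFun (shift_tripleSeq p E) i
  rwa [shift, hshift, add_comm] at h

lemma tripleSeq_congr {E F : ℕ → Bool} {N i : ℕ} (h : ∀ j < N, E j = F j) (hi : i + 1 < 3 * N) :
    tripleSeq E i = tripleSeq F i := by
  rw [tripleSeq, tripleSeq]
  split_ifs
  · rw [h _ (by omega)]
  · rfl
  · rw [h _ (by omega)]

lemma plusBlock_map_range_succ {N : ℕ} {f g : ℕ → ℕ} (hfg : ∀ i < N, f i = g i) (hg : g N = 1) :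
    plusBlock ((List.range (N + 1)).map f) = (List.range (N + 1)).map g := by
  simp only [plusBlock, List.range_succ, List.map_append, List.map_singleton,
    List.dropLast_concat, hg]
  rw [List.map_congr_left fun i hi => hfg i (List.mem_range.1 hi)]

lemma thetaBlock_map_range_tripleSeq (E : ℕ → Bool) (N : ℕ) :
    thetaBlock ((List.range N).map (tripleSeq E)) =
      (List.range N).map (tripleSeq fun j => !E j) := by
  refine List.ext_getElem (by simp [thetaBlock]) fun i _ _ => ?_
  simp only [thetaBlock, List.getElem_mapIdx, List.getElem_map, List.getElem_range]
  obtain ⟨j, rfl | rfl | rfl⟩ := exists_eq_three_mul_add i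
  · cases h : E j <;> simp [tripleSeq_three_mul, h]
  · simp [tripleSeq_three_mul_add_one]
  · cases h : E (j + 1) <;> simp [tripleSeq_three_mul_add_two, h]

lemma prefixPeriodic_map_range {N M i : ℕ} (hM : 0 < M) (f g : ℕ → ℕ) :
    prefixPeriodic ((List.range N).map f) ((List.range M).map g) i =
      if i < N then f i else g ((i - N) % M) := by
  simp only [prefixPeriodic, List.length_map, List.length_range]
  split_ifs with hi
  · simp [hi]
  · simp [Nat.mod_lt _ hM]

lemma plusBlock_map_range_tripleSeq_thueMorse_mod (n : ℕ) :
    plusBlock ((List.range (3 * 2 ^ n)).map (tripleSeq fun j => thueMorse (j % 2 ^ n))) =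
      (List.range (3 * 2 ^ n)).map (tripleSeq thueMorse) := by
  obtain ⟨k, hk⟩ := Nat.exists_eq_add_one_of_ne_zero (Nat.two_pow_pos n).ne'
  rw [hk]
  refine plusBlock_map_range_succ (N := 3 * k + 2) (fun i hi => ?_) ?_
  · refine tripleSeq_congr (N := k + 1) (fun j hj => ?_) (by omega)
    rw [Nat.mod_eq_of_lt hj]
  · rw [tripleSeq_three_mul_add_two, ← hk, thueMorse_two_pow]
    rfl

lemma tB_eq_map_range (n : ℕ) :
    tB n = (List.range (3 * 2 ^ n)).map (tripleSeq fun j => thueMorse (j % 2 ^ n)) := by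
  induction n with
  | zero => simp [tB, tripleSeq, List.range_succ, Nat.mod_one, thueMorse_zero]
  | succ n ih =>
    rw [tB, ih, plusBlock_map_range_tripleSeq_thueMorse_mod, thetaBlock_map_range_tripleSeq,
      pow_succ 2 n, mul_two, mul_add, List.range_add, List.map_append, List.map_map]
    congr 1 <;> refine List.map_congr_left fun i hi => ?_ <;> rw [List.mem_range] at hi
    · refine tripleSeq_congr (N := 2 ^ n + 1) (fun j hj => ?_) (by omega)
      rw [Nat.mod_eq_of_lt (by omega)]
    · change _ = shift (3 * 2 ^ n) _ i
      rw [shift_tripleSeq]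
      refine tripleSeq_congr (N := 2 ^ n + 1) (fun j hj => ?_) (by omega)
      rw [shift]
      rcases (Nat.lt_succ_iff.1 hj).lt_or_eq with hj | rfl
      · rw [Nat.mod_eq_of_lt (by omega), thueMorse_two_pow_add hj]
      · rw [Nat.mod_self, thueMorse_two_pow, thueMorse_zero]
        rfl

lemma hatSeq_eq (n : ℕ) : hatSeq n = tripleSeq (limitCode n) := by
  funext i
  have : 0 < 2 ^ (n + 1) := by positivity
  rw [hatSeq, tB_eq_map_range, plusBlock_map_range_tripleSeq_thueMorse_mod,
    thetaBlock_map_range_tripleSeq, prefixPeriodic_map_range (by positivity)]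
  split_ifs with hi
  · refine tripleSeq_congr (N := 2 ^ (n + 1) + 1) (fun j hj => ?_) (by omega)
    rcases (Nat.lt_succ_iff.1 hj).lt_or_eq with hj | rfl
    · rw [limitCode_of_lt hj]
    · rw [limitCode_of_le le_rfl, Nat.mod_self, thueMorse_two_pow, thueMorse_zero]
      rfl
  · obtain ⟨j, rfl⟩ := Nat.exists_eq_add_of_le (not_lt.1 hi)
    have hper : Function.Periodic (fun j => !thueMorse (j % 2 ^ (n + 1))) (2 ^ (n + 1)) :=
      fun j => by simp only [Nat.add_mod_right]
    rw [Nat.add_sub_cancel_left, (periodic_tripleSeq hper).map_mod_nat, ← shift_limitCode,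
      ← shift_tripleSeq, shift]

theorem tendsto_betaK {n : ℕ} {b : ℝ} (hb : 1 < b) (hsum : SumsToOne b (hatSeq n)) :
    Tendsto (fun m => betaK (3 * (2 * m + 1) * 2 ^ n)) atTop (𝓝 b) := by
  have hcrit (m : ℕ) := betaK_mem_Ioo_and_sumsToOne (Nat.le_add_left 1 m) n
  rw [hatSeq_eq] at hsum
  refine (tendsto_add_atTop_iff_nat 1).1 ?_
  exact tendsto_base (fun m => (hcrit m).1.1) (fun m => isBinary_tripleSeq _)
    (fun m => (hcrit m).2) hb (isBinary_tripleSeq _) hsum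
    ((tendsto_extremalSeq n).comp (tendsto_add_atTop_nat 1))

/-- For fixed n ≥ 0, the sequence m ↦ β_{3(2m+1)2ⁿ} (m ≥ 1) is strictly
decreasing and converges to the base β̂_n ∈ (1,2] whose quasi-greedy
expansion of 1 is t_{n+2}⁺ (Θ(t_{n+2}))^∞. -/
theorem stmt7 (n : ℕ) (b : ℝ) (hb : b ∈ Set.Ioc (1 : ℝ) 2)
    (hqg : FatSierpinski.IsQuasiGreedy b (FatSierpinski.hatSeq n)) :
    StrictAntiOn (fun m : ℕ => FatSierpinski.betaK (3 * (2 * m + 1) * 2 ^ n))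
      (Set.Ici 1) ∧
    Filter.Tendsto (fun m : ℕ => FatSierpinski.betaK (3 * (2 * m + 1) * 2 ^ n))
      Filter.atTop (nhds b) :=
  ⟨strictAntiOn_betaK n, tendsto_betaK hb.1 hqg.2.2.1⟩

end FatSierpinski
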